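/- Let w, w′ ∈ Sₙ and k ≤ n with w →_{c[k,m]} w′, witnessed by a₁,b₁,…,a_m,b_m with aᵢ ≤ k < bᵢ, w′ = w·t_{a₁,b₁}⋯t_{a_m,b_m}, ℓ(w·t_{a₁,b₁}⋯t_{aᵢ,bᵢ}) = ℓ(w)+i for all i, and a₁,…,a_m distinct. For 1 ≤ j ≤ n−k set d_j = #{i : bᵢ = n+1−j}, μ′_j = d_{j+1} + ⋯ + d_{n−k}, and λ′_j = μ′_j + d_j (partitions with at most n−k parts, λ′/μ′ a skew row of length m). Then for every partition ν with at most k parts and ν₁ ≤ n−k, the structure constant c^{w′}_{w, w(ν)} equals the Littlewood–Richardson coefficient c^{λ′}_{μ′, νᵗ}, where νᵗ is the conjugate (transpose) partition of ν; equivalently, c^{w′}_{w, w(ν)} = c^λ_{μ,ν} where λ = (λ′)ᵗ and μ = (μ′)ᵗ, so that λ/μ is a skew column of length m. -/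

import Mathlib

open Equiv MvPolynomial

attribute [local instance] Classical.propDecidable

namespace SchubertPieri

/-- Position `j ∈ {1,…,N}` (1-indexed) as an element of `Fin N` (0-indexed). -/
def pos (N : ℕ) [NeZero N] (j : ℕ) : Fin N :=
  ⟨(j - 1) % N, Nat.mod_lt _ (Nat.pos_of_ne_zero (NeZero.ne N))⟩

/-- The transposition `t_{a,b}` interchanging positions `a` and `b` (1-indexed). -/
def t (N : ℕ) [NeZero N] (a b : ℕ) : Equiv.Perm (Fin N) :=
  Equiv.swap (pos N a) (pos N b)

/-- The value `w(j)` for `j ∈ {1,…,N}` (1-indexed). -/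
def val {N : ℕ} [NeZero N] (w : Equiv.Perm (Fin N)) (j : ℕ) : ℕ :=
  (w (pos N j) : ℕ) + 1

/-- The length of `w`: its number of inversions. -/
def len {N : ℕ} (w : Equiv.Perm (Fin N)) : ℕ :=
  (Finset.univ.filter fun p : Fin N × Fin N => p.1 < p.2 ∧ w p.2 < w p.1).card

/-- The longest permutation `w₀ : j ↦ N+1-j`. -/
def w0 (N : ℕ) : Equiv.Perm (Fin N) :=
  ⟨Fin.rev, Fin.rev, Fin.rev_rev, Fin.rev_rev⟩

/-- The product `t_{a 0, b 0} ⋯ t_{a (i-1), b (i-1)}`. -/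
def tProd (N : ℕ) [NeZero N] (a b : ℕ → ℕ) (i : ℕ) : Equiv.Perm (Fin N) :=
  ((List.range i).map fun j => t N (a j) (b j)).prod

/-- `r[k,m] = t_{k,k+1} t_{k,k+2} ⋯ t_{k,k+m}`, the (m+1)-cycle with
`r[k,m](k) = k+m` and `r[k,m](j) = j-1` for `k+1 ≤ j ≤ k+m`. -/
def rPerm (N k m : ℕ) [NeZero N] : Equiv.Perm (Fin N) :=
  ((List.range m).map fun i => t N k (k + 1 + i)).prod

/-- `c[k,m] = t_{k,k+1} t_{k-1,k+1} ⋯ t_{k-m+1,k+1}`, the (m+1)-cycle with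
`c[k,m](j) = j+1` for `k-m+1 ≤ j ≤ k` and `c[k,m](k+1) = k-m+1`. -/
def cPerm (N k m : ℕ) [NeZero N] : Equiv.Perm (Fin N) :=
  ((List.range m).map fun i => t N (k - i) (k + 1)).prod

/-- The conditions that `aᵢ ≤ k < bᵢ` (with all indices in `{1,…,N}`) and that
`ℓ(w t_{a₁ b₁} ⋯ t_{aᵢ bᵢ}) = ℓ(w) + i` for `1 ≤ i ≤ m`. -/
def StepOK (N k m : ℕ) [NeZero N] (w : Equiv.Perm (Fin N)) (a b : ℕ → ℕ) : Prop :=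
  (∀ i, i < m → 1 ≤ a i ∧ a i ≤ k ∧ k < b i ∧ b i ≤ N) ∧
  (∀ i, i ≤ m → len (w * tProd N a b i) = len w + i)

/-- `w →_{r[k,m]} w'`. -/
def RelR (N k m : ℕ) [NeZero N] (w w' : Equiv.Perm (Fin N)) : Prop :=
  ∃ a b : ℕ → ℕ, StepOK N k m w a b ∧ w' = w * tProd N a b m ∧
    (∀ i j, i < m → j < m → i ≠ j → b i ≠ b j)

/-- `w →_{c[k,m]} w'`. -/
def RelC (N k m : ℕ) [NeZero N] (w w' : Equiv.Perm (Fin N)) : Prop :=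
  ∃ a b : ℕ → ℕ, StepOK N k m w a b ∧ w' = w * tProd N a b m ∧
    (∀ i j, i < m → j < m → i ≠ j → a i ≠ a j)

/-- The divided difference operator `∂ᵢ f = (f - sᵢ·f)/(xᵢ - xᵢ₊₁)` (1-indexed `i`);
the quotient is exact, and is recovered here as the (unique) witness of divisibility. -/
noncomputable def divDiff {N : ℕ} [NeZero N] (i : ℕ) (f : MvPolynomial (Fin N) ℤ) :
    MvPolynomial (Fin N) ℤ :=
  if h : (X (pos N i) - X (pos N (i + 1))) ∣ (f - rename (⇑(t N i (i + 1))) f) then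
    h.choose
  else 0

/-- `∂_{a₁} ∘ ⋯ ∘ ∂_{a_p}` applied to `f`, for a word `l = [a₁,…,a_p]`. -/
noncomputable def divDiffWord {N : ℕ} [NeZero N] (l : List ℕ) (f : MvPolynomial (Fin N) ℤ) :
    MvPolynomial (Fin N) ℤ :=
  l.foldr divDiff f

/-- Auxiliary: produce a reduced word for `w` by repeatedly removing a descent. -/
def redWordAux (N : ℕ) [NeZero N] : ℕ → Equiv.Perm (Fin N) → List ℕ
  | 0, _ => []
  | fuel + 1, w =>
    match ((List.range (N - 1)).map (· + 1)).find? (fun i => decide (val w (i + 1) < val w i)) with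
    | none => []
    | some i => redWordAux N fuel (w * t N i (i + 1)) ++ [i]

/-- A canonical reduced word `(a₁,…,a_p)` for `w`, i.e. `w = s_{a₁} ⋯ s_{a_p}` with `p = ℓ(w)`. -/
def redWord (N : ℕ) [NeZero N] (w : Equiv.Perm (Fin N)) : List ℕ :=
  redWordAux N (N * N) w

/-- The staircase monomial `x₁^{N-1} x₂^{N-2} ⋯ x_{N-1}`. -/
noncomputable def staircase (N : ℕ) : MvPolynomial (Fin N) ℤ :=
  ∏ i : Fin N, X i ^ (N - 1 - (i : ℕ))

/-- The Schubert polynomial `𝔖_w = ∂_{w⁻¹w₀}(x₁^{N-1} ⋯ x_{N-1})`. -/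
noncomputable def schubertPoly (N : ℕ) [NeZero N] (w : Equiv.Perm (Fin N)) :
    MvPolynomial (Fin N) ℤ :=
  divDiffWord (redWord N (w⁻¹ * w0 N)) (staircase N)

/-- The ideal of `Rₙ` generated by the symmetric polynomials with zero constant term. -/
noncomputable def symIdeal (N : ℕ) : Ideal (MvPolynomial (Fin N) ℤ) :=
  Ideal.span {f : MvPolynomial (Fin N) ℤ | f.IsSymmetric ∧ constantCoeff f = 0}

/-- The ring `Hₙ = Rₙ/𝒮`. -/
abbrev HRing (N : ℕ) := MvPolynomial (Fin N) ℤ ⧸ symIdeal N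

/-- The class of the Schubert polynomial `𝔖_w` in `Hₙ`. -/
noncomputable def SS (N : ℕ) [NeZero N] (w : Equiv.Perm (Fin N)) : HRing N :=
  Ideal.Quotient.mk (symIdeal N) (schubertPoly N w)

/-- The complete homogeneous symmetric polynomial of degree `m` in `x₁,…,x_k`. -/
noncomputable def hPoly (N k m : ℕ) : MvPolynomial (Fin N) ℤ :=
  ∑ s ∈ (Finset.univ.filter fun i : Fin N => (i : ℕ) < k).sym m,
    (Multiset.map X (s : Multiset (Fin N))).prod

/-- The elementary symmetric polynomial of degree `m` in `x₁,…,x_k`. -/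
noncomputable def ePoly (N k m : ℕ) : MvPolynomial (Fin N) ℤ :=
  ∑ s ∈ (Finset.univ.filter fun i : Fin N => (i : ℕ) < k).powersetCard m, ∏ i ∈ s, X i

/-- Covering relation of the `k`-Bruhat order. -/
def kCover (N k : ℕ) [NeZero N] (w w' : Equiv.Perm (Fin N)) : Prop :=
  ∃ a b : ℕ, 1 ≤ a ∧ a ≤ k ∧ k < b ∧ b ≤ N ∧ w' = w * t N a b ∧ len w' = len w + 1

/-- The (strict) `k`-Bruhat order `<ₖ`. -/
def kBruhat (N k : ℕ) [NeZero N] : Equiv.Perm (Fin N) → Equiv.Perm (Fin N) → Prop :=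
  Relation.TransGen (kCover N k)

/-- The label `w⁽ⁱ⁺¹⁾(a_{i+1})` (0-indexed `i`) of the `(i+1)`-st step of a path. -/
def label {N : ℕ} [NeZero N] (w : Equiv.Perm (Fin N)) (a b : ℕ → ℕ) (i : ℕ) : ℕ :=
  val (w * tProd N a b (i + 1)) (a i)

/-- `(a,b)` encodes a path of length `m` in the `k`-Bruhat order from `w` to `w'`
(normalized so that `a i = b i = 0` for `i ≥ m`, making the encoding unique). -/
def PathWit (N k m : ℕ) [NeZero N] (w w' : Equiv.Perm (Fin N))
    (ab : (ℕ → ℕ) × (ℕ → ℕ)) : Prop :=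
  StepOK N k m w ab.1 ab.2 ∧ w' = w * tProd N ab.1 ab.2 m ∧
    ∀ i, m ≤ i → ab.1 i = 0 ∧ ab.2 i = 0

/-- Paths of length `m` in the `k`-Bruhat order from `w` to `w'` with strictly
increasing labels. -/
def IncPaths (N k m : ℕ) [NeZero N] (w w' : Equiv.Perm (Fin N)) :
    Set ((ℕ → ℕ) × (ℕ → ℕ)) :=
  {ab | PathWit N k m w w' ab ∧
    ∀ i j, i < j → j < m → label w ab.1 ab.2 i < label w ab.1 ab.2 j}

/-- Paths of length `m` in the `k`-Bruhat order from `w` to `w'` with strictly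
decreasing labels. -/
def DecPaths (N k m : ℕ) [NeZero N] (w w' : Equiv.Perm (Fin N)) :
    Set ((ℕ → ℕ) × (ℕ → ℕ)) :=
  {ab | PathWit N k m w w' ab ∧
    ∀ i j, i < j → j < m → label w ab.1 ab.2 j < label w ab.1 ab.2 i}


/-- The cycle `(x₁ x₂ … x_r)` (sending `x₁ ↦ x₂ ↦ ⋯ ↦ x_r ↦ x₁`), as a product
of transpositions. -/
def cycleList (N : ℕ) [NeZero N] (l : List ℕ) : Equiv.Perm (Fin N) :=
  ((l.zip l.tail).map fun p => t N p.1 p.2).prod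

/-- The Grassmannian permutation `h[k;p,q]` of descent `k` and hook shape `(p,1^{q-1})`:
the `(p+q)`-cycle `(k-q+1  k-q+2 … k  k+p  k+p-1 … k+1)`. -/
def hookPerm (N k p q : ℕ) [NeZero N] : Equiv.Perm (Fin N) :=
  cycleList N (((List.range q).map fun i => k - q + 1 + i) ++
    ((List.range p).reverse.map fun i => k + 1 + i))

/-- `w|ₚ ∈ S_{N-1}`: delete row `p` and column `w(p)` from the permutation matrix of `w`. -/
def drop {N : ℕ} (w : Equiv.Perm (Fin (N + 1))) (p : Fin (N + 1)) : Equiv.Perm (Fin N) :=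
  Equiv.removeNone (((finSuccEquiv' p).symm.trans (w : Fin (N + 1) ≃ Fin (N + 1))).trans
    (finSuccEquiv' (w p)))

/-- `lam` is a partition with at most `k` parts (1-indexed parts `lam 1 ≥ lam 2 ≥ ⋯`,
normalized by `lam 0 = 0`). -/
def IsPartFun (k : ℕ) (lam : ℕ → ℕ) : Prop :=
  lam 0 = 0 ∧ (∀ j, 1 ≤ j → lam (j + 1) ≤ lam j) ∧ ∀ j, k < j → lam j = 0

/-- `h_d(x₁,…,x_k)` for an integer `d`, with `h_d = 0` for `d < 0`. -/
noncomputable def hPolyZ (N k : ℕ) (d : ℤ) : MvPolynomial (Fin N) ℤ :=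
  if 0 ≤ d then hPoly N k d.toNat else 0

/-- The Schur polynomial `s_λ(x₁,…,x_k)`, via the Jacobi–Trudi determinant
`det(h_{λᵢ+j-i})_{1 ≤ i,j ≤ k}`. -/
noncomputable def schurPoly (N k : ℕ) (lam : ℕ → ℕ) : MvPolynomial (Fin N) ℤ :=
  (Matrix.of fun i j : Fin k =>
    hPolyZ N k ((lam ((i : ℕ) + 1) : ℤ) + (j : ℕ) - (i : ℕ))).det

/-- `r_j = #{i : aᵢ = j}` (with `i` ranging over `0,…,m-1`, 0-indexed). -/
def rJ (a : ℕ → ℕ) (m j : ℕ) : ℕ := ((Finset.range m).filter fun i => a i = j).card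

/-- `μ_j = r_{j+1} + ⋯ + r_k`. -/
def muJ (a : ℕ → ℕ) (m k j : ℕ) : ℕ :=
  if j = 0 then 0 else ∑ j' ∈ Finset.Icc (j + 1) k, rJ a m j'

/-- `λ_j = μ_j + r_j`. -/
def lamJ (a : ℕ → ℕ) (m k j : ℕ) : ℕ :=
  if j = 0 then 0 else muJ a m k j + rJ a m j

/-- `d_j = #{i : bᵢ = N+1-j}` (with `i` ranging over `0,…,m-1`, 0-indexed). -/
def dJ (b : ℕ → ℕ) (m N j : ℕ) : ℕ :=
  ((Finset.range m).filter fun i => b i = N + 1 - j).card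

/-- `μ′_j = d_{j+1} + ⋯ + d_{N-k}`. -/
def muJ' (b : ℕ → ℕ) (m N k j : ℕ) : ℕ :=
  if j = 0 then 0 else ∑ j' ∈ Finset.Icc (j + 1) (N - k), dJ b m N j'

/-- `λ′_j = μ′_j + d_j`. -/
def lamJ' (b : ℕ → ℕ) (m N k j : ℕ) : ℕ :=
  if j = 0 then 0 else muJ' b m N k j + dJ b m N j

/-- The conjugate (transpose) partition: `νᵗ_j = #{i : νᵢ ≥ j}`, for `ν` with at
most `k` parts. -/
def conjPart (k : ℕ) (nu : ℕ → ℕ) (j : ℕ) : ℕ :=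
  if j = 0 then 0 else ((Finset.Icc 1 k).filter fun i => j ≤ nu i).card

/-- `wv` is the Grassmannian permutation of descent `k` and shape `nu`:
`wv(j) = j + ν_{k+1-j}` for `1 ≤ j ≤ k`, and `wv` is increasing on `{k+1,…,N}`. -/
def IsGrassOf (N k : ℕ) [NeZero N] (nu : ℕ → ℕ) (wv : Equiv.Perm (Fin N)) : Prop :=
  (∀ j, 1 ≤ j → j ≤ k → val wv j = j + nu (k + 1 - j)) ∧
  (∀ j, k < j → j < N → val wv j < val wv (j + 1))

/-- Paths of length `m` in the `k`-Bruhat order from `w` to `w'` whose labels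
increase strictly for the first `p` steps and decrease strictly thereafter
(positions `p, p+1, …, m` being decreasing, 1-indexed). -/
def IncDecPaths (N k m p : ℕ) [NeZero N] (w w' : Equiv.Perm (Fin N)) :
    Set ((ℕ → ℕ) × (ℕ → ℕ)) :=
  {ab | PathWit N k m w w' ab ∧
    (∀ i j, i < j → j < p → label w ab.1 ab.2 i < label w ab.1 ab.2 j) ∧
    (∀ i j, p - 1 ≤ i → i < j → j < m → label w ab.1 ab.2 j < label w ab.1 ab.2 i)}

/-- Paths of length `m` in the `k`-Bruhat order from `w` to `w'` whose labels
decrease strictly for the first `q` steps and increase strictly thereafter. -/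
def DecIncPaths (N k m q : ℕ) [NeZero N] (w w' : Equiv.Perm (Fin N)) :
    Set ((ℕ → ℕ) × (ℕ → ℕ)) :=
  {ab | PathWit N k m w w' ab ∧
    (∀ i j, i < j → j < q → label w ab.1 ab.2 j < label w ab.1 ab.2 i) ∧
    (∀ i j, q - 1 ≤ i → i < j → j < m → label w ab.1 ab.2 i < label w ab.1 ab.2 j)}


set_option linter.unusedSimpArgs false
/-- simple transposition, 0-indexed -/
def sw {n : ℕ} (i : Fin n) : Equiv.Perm (Fin (n + 1)) := Equiv.swap i.castSucc i.succ

theorem X_sub_X_ne {n : ℕ} {p q : Fin (n + 1)} (h : p ≠ q) :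
    (X p - X q : MvPolynomial (Fin (n + 1)) ℤ) ≠ 0 := by
  intro e
  exact h (MvPolynomial.X_injective (sub_eq_zero.mp e))

theorem dvd_sub_rename {n : ℕ} (p q : Fin (n + 1)) (f : MvPolynomial (Fin (n + 1)) ℤ) :
    (X p - X q) ∣ f - rename (⇑(Equiv.swap p q)) f := by
  induction f using MvPolynomial.induction_on with
  | C a => simp
  | add f g hf hg =>
    rw [map_add, add_sub_add_comm]
    exact dvd_add hf hg
  | mul_X f i hf =>
    have e : f * X i - rename (⇑(Equiv.swap p q)) (f * X i) =
        (f - rename (⇑(Equiv.swap p q)) f) * X i +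
          rename (⇑(Equiv.swap p q)) f * (X i - X (Equiv.swap p q i)) := by
      rw [map_mul, rename_X]; ring
    rw [e]
    refine dvd_add (hf.mul_right _) (Dvd.dvd.mul_left ?_ _)
    by_cases h1 : i = p
    · subst h1; simp
    · by_cases h2 : i = q
      · subst h2
        rw [Equiv.swap_apply_right]
        exact ⟨-1, by ring⟩
      · rw [Equiv.swap_apply_of_ne_of_ne h1 h2]; simp

theorem cs_ne_succ {n : ℕ} (i : Fin n) : i.castSucc ≠ i.succ :=
  (Fin.castSucc_lt_succ).ne

/-- the root `x_i - x_{i+1}` -/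
noncomputable def rt {n : ℕ} (i : Fin n) : MvPolynomial (Fin (n + 1)) ℤ :=
  X i.castSucc - X i.succ

theorem rt_ne {n : ℕ} (i : Fin n) : rt i ≠ 0 := X_sub_X_ne (cs_ne_succ i)

noncomputable def D0 {n : ℕ} (i : Fin n) (f : MvPolynomial (Fin (n + 1)) ℤ) :
    MvPolynomial (Fin (n + 1)) ℤ := (dvd_sub_rename i.castSucc i.succ f).choose

theorem D0_spec {n : ℕ} (i : Fin n) (f : MvPolynomial (Fin (n + 1)) ℤ) :
    rt i * D0 i f = f - rename (⇑(sw i)) f :=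
  ((dvd_sub_rename i.castSucc i.succ f).choose_spec).symm

theorem D0_unique {n : ℕ} (i : Fin n) (f g : MvPolynomial (Fin (n + 1)) ℤ)
    (h : rt i * g = f - rename (⇑(sw i)) f) : D0 i f = g :=
  mul_left_cancel₀ (rt_ne i) ((D0_spec i f).trans h.symm)

/-- divided difference as a linear map -/
noncomputable def D {n : ℕ} (i : Fin n) :
    MvPolynomial (Fin (n + 1)) ℤ →ₗ[ℤ] MvPolynomial (Fin (n + 1)) ℤ where
  toFun := D0 i
  map_add' f g := by
    apply D0_unique
    rw [mul_add, D0_spec, D0_spec, map_add]; ring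
  map_smul' c f := by
    apply D0_unique
    simp only [RingHom.id_apply]
    rw [mul_smul_comm, D0_spec, map_zsmul, smul_sub]

theorem D_spec {n : ℕ} (i : Fin n) (f : MvPolynomial (Fin (n + 1)) ℤ) :
    rt i * D i f = f - rename (⇑(sw i)) f := D0_spec i f

theorem D_unique {n : ℕ} (i : Fin n) {f g : MvPolynomial (Fin (n + 1)) ℤ}
    (h : rt i * g = f - rename (⇑(sw i)) f) : D i f = g := D0_unique i f g h

theorem pos_castSucc {n : ℕ} (i : Fin n) : pos (n + 1) ((i : ℕ) + 1) = i.castSucc := by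
  ext
  simp only [pos, Fin.val_castSucc]
  rw [Nat.add_sub_cancel]
  exact Nat.mod_eq_of_lt (by omega)

theorem pos_succ {n : ℕ} (i : Fin n) : pos (n + 1) ((i : ℕ) + 1 + 1) = i.succ := by
  ext
  simp only [pos, Fin.val_succ]
  rw [Nat.add_sub_cancel]
  exact Nat.mod_eq_of_lt (by omega)

theorem t_eq_sw {n : ℕ} (i : Fin n) : t (n + 1) ((i : ℕ) + 1) ((i : ℕ) + 1 + 1) = sw i := by
  unfold t sw
  rw [pos_castSucc, pos_succ]

theorem divDiff_eq {n : ℕ} (i : Fin n) (f : MvPolynomial (Fin (n + 1)) ℤ) :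
    divDiff ((i : ℕ) + 1) f = D i f := by
  unfold divDiff
  rw [t_eq_sw, pos_castSucc, pos_succ]
  have h : (X i.castSucc - X i.succ) ∣ f - rename (⇑(sw i)) f :=
    dvd_sub_rename i.castSucc i.succ f
  rw [dif_pos h]
  exact (D_unique i h.choose_spec.symm).symm

theorem sw_castSucc {n : ℕ} (i : Fin n) : sw i i.castSucc = i.succ := Equiv.swap_apply_left _ _
theorem sw_succ {n : ℕ} (i : Fin n) : sw i i.succ = i.castSucc := Equiv.swap_apply_right _ _
theorem sw_of_ne {n : ℕ} (i : Fin n) {j : Fin (n + 1)} (h1 : j ≠ i.castSucc) (h2 : j ≠ i.succ) :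
    sw i j = j := Equiv.swap_apply_of_ne_of_ne h1 h2
theorem sw_sw {n : ℕ} (i : Fin n) (j : Fin (n + 1)) : sw i (sw i j) = j :=
  Equiv.swap_apply_self _ _ _
theorem sw_mul_self {n : ℕ} (i : Fin n) : sw i * sw i = 1 := Equiv.swap_mul_self _ _

theorem rename_sw_sw {n : ℕ} (i : Fin n) (f : MvPolynomial (Fin (n + 1)) ℤ) :
    rename (⇑(sw i)) (rename (⇑(sw i)) f) = f := by
  rw [rename_rename]
  have : (⇑(sw i) ∘ ⇑(sw i)) = id := by funext j; exact sw_sw i j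
  rw [this, rename_id]; rfl

theorem rename_rt {n : ℕ} (i : Fin n) : rename (⇑(sw i)) (rt i) = - rt i := by
  simp [rt, sw_castSucc, sw_succ]

theorem rename_D {n : ℕ} (i : Fin n) (f : MvPolynomial (Fin (n + 1)) ℤ) :
    rename (⇑(sw i)) (D i f) = D i f := by
  have h := congrArg (rename (⇑(sw i))) (D_spec i f)
  rw [map_mul, map_sub, rename_rt, rename_sw_sw] at h
  refine (D_unique i ?_).symm
  linear_combination -h

theorem D_of_inv {n : ℕ} (i : Fin n) {f : MvPolynomial (Fin (n + 1)) ℤ}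
    (h : rename (⇑(sw i)) f = f) : D i f = 0 := D_unique i (by rw [h]; ring)

theorem D_D {n : ℕ} (i : Fin n) (f : MvPolynomial (Fin (n + 1)) ℤ) : D i (D i f) = 0 :=
  D_of_inv i (rename_D i f)

theorem D_mul_of_inv {n : ℕ} (i : Fin n) {g : MvPolynomial (Fin (n + 1)) ℤ}
    (h : rename (⇑(sw i)) g = g) (f : MvPolynomial (Fin (n + 1)) ℤ) :
    D i (g * f) = g * D i f := by
  apply D_unique
  rw [map_mul, h]
  linear_combination g * D_spec i f

theorem D_X_mul {n : ℕ} (i : Fin n) (b : Fin (n + 1)) (f : MvPolynomial (Fin (n + 1)) ℤ) :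
    D i (X b * f) = X (sw i b) * D i f + (if b = i.castSucc then f else 0)
      - (if b = i.succ then f else 0) := by
  apply D_unique
  rw [map_mul, rename_X]
  have h := D_spec i f
  by_cases h1 : b = i.castSucc
  · subst h1
    rw [if_pos rfl, if_neg (cs_ne_succ i), sw_castSucc]
    unfold rt at *
    linear_combination X i.succ * h
  · by_cases h2 : b = i.succ
    · subst h2
      rw [if_neg h1, if_pos rfl, sw_succ]
      unfold rt at *
      linear_combination X i.castSucc * h
    · rw [if_neg h1, if_neg h2, sw_of_ne i h1 h2]
      linear_combination X b * h

theorem sw_comm {n : ℕ} {i j : Fin n} (h : (i : ℕ) + 1 < j) : sw i * sw j = sw j * sw i := by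
  apply Equiv.Perm.Disjoint.commute
  intro x
  by_cases h1 : x = i.castSucc
  · right; apply sw_of_ne <;> · rw [h1]; intro e; have := congrArg Fin.val e; simp at this; omega
  · by_cases h2 : x = i.succ
    · right; apply sw_of_ne <;> · rw [h2]; intro e; have := congrArg Fin.val e; simp at this; omega
    · left; exact sw_of_ne i h1 h2

theorem sw_braid {n : ℕ} {i j : Fin n} (h : (i : ℕ) + 1 = j) :
    sw i * sw j * sw i = sw j * sw i * sw j := by
  have e : i.succ = j.castSucc := by ext; simpa using h
  have h13 : i.castSucc ≠ j.succ := by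
    intro e; have := congrArg Fin.val e; simp at this; omega
  have h12 := cs_ne_succ i
  have h23 := cs_ne_succ j
  unfold sw
  rw [e] at h12 ⊢
  ext x
  by_cases x1 : x = i.castSucc
  · subst x1; simp [Equiv.swap_apply_def, h12, h13, h12.symm, h13.symm, h23, h23.symm]
  · by_cases x2 : x = j.castSucc
    · subst x2; simp [Equiv.swap_apply_def, h12, h13, h12.symm, h13.symm, h23, h23.symm]
    · by_cases x3 : x = j.succ
      · subst x3; simp [Equiv.swap_apply_def, h12, h13, h12.symm, h13.symm, h23, h23.symm]
      · simp [Equiv.swap_apply_def, x1, x2, x3]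

theorem rename_mul' {n : ℕ} (u v : Equiv.Perm (Fin (n + 1))) (f : MvPolynomial (Fin (n + 1)) ℤ) :
    rename (⇑u) (rename (⇑v) f) = rename (⇑(u * v)) f := by
  rw [rename_rename]; rfl

theorem D_comm {n : ℕ} {i j : Fin n} (h : (i : ℕ) + 1 < j) (f : MvPolynomial (Fin (n + 1)) ℤ) :
    D i (D j f) = D j (D i f) := by
  have hij : rename (⇑(sw i)) (rt j) = rt j := by
    have a1 : sw i j.castSucc = j.castSucc := by
      apply sw_of_ne <;> · intro e; have := congrArg Fin.val e; simp at this; omega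
    have a2 : sw i j.succ = j.succ := by
      apply sw_of_ne <;> · intro e; have := congrArg Fin.val e; simp at this; omega
    simp [rt, a1, a2]
  have hji : rename (⇑(sw j)) (rt i) = rt i := by
    have a1 : sw j i.castSucc = i.castSucc := by
      apply sw_of_ne <;> · intro e; have := congrArg Fin.val e; simp at this; omega
    have a2 : sw j i.succ = i.succ := by
      apply sw_of_ne <;> · intro e; have := congrArg Fin.val e; simp at this; omega
    simp [rt, a1, a2]
  apply mul_left_cancel₀ (rt_ne i)
  apply mul_left_cancel₀ (rt_ne j)
  have e1 := D_spec i (D j f)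
  have e2 := D_spec j f
  have e2' := congrArg (rename (⇑(sw i))) e2
  have f1 := D_spec j (D i f)
  have f2 := D_spec i f
  have f2' := congrArg (rename (⇑(sw j))) f2
  rw [map_mul, map_sub, hij, rename_mul'] at e2'
  rw [map_mul, map_sub, hji, rename_mul', ← sw_comm h] at f2'
  linear_combination rt j * e1 + e2 - e2' - rt i * f1 - f2 + f2'

theorem D_braid {n : ℕ} {i j : Fin n} (h : (i : ℕ) + 1 = j) (f : MvPolynomial (Fin (n + 1)) ℤ) :
    D i (D j (D i f)) = D j (D i (D j f)) := by
  have e : i.succ = j.castSucc := by ext; simpa using h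
  have h13 : i.castSucc ≠ j.succ := by
    intro e; have := congrArg Fin.val e; simp at this; omega
  set F : MvPolynomial (Fin (n + 1)) ℤ := X i.castSucc - X j.succ with hF
  have hF0 : F ≠ 0 := X_sub_X_ne h13
  have b1 : sw j i.castSucc = i.castSucc := by
    apply sw_of_ne
    · rw [← e]; exact cs_ne_succ i
    · exact h13
  have b2 : sw i j.succ = j.succ := by
    apply sw_of_ne
    · exact h13.symm
    · rw [e]; exact (cs_ne_succ j).symm
  have r1 : rename (⇑(sw i)) (rt j) = F := by
    simp only [rt, map_sub, rename_X, b2, ← e, sw_succ, hF]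
  have r2 : rename (⇑(sw j)) (rt i) = F := by
    simp only [rt, map_sub, rename_X, b1, e, sw_castSucc, hF]
  have r3 : rename (⇑(sw i)) F = rt j := by
    simp only [rt, hF, map_sub, rename_X, b2, sw_castSucc, ← e]
  have r4 : rename (⇑(sw j)) F = rt i := by
    simp only [rt, hF, map_sub, rename_X, b1, sw_succ, e]
  have rF : F = rt i + rt j := by simp only [rt, hF, e]; ring
  apply mul_left_cancel₀ (rt_ne i)
  apply mul_left_cancel₀ (rt_ne j)
  apply mul_left_cancel₀ hF0
  -- side 1
  have g1 := D_spec i f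
  have g2 := D_spec j (D i f)
  have g3 := D_spec i (D j (D i f))
  have g2' := congrArg (rename (⇑(sw i))) g2
  rw [map_mul, map_sub, r1, rename_D] at g2'
  have g1' := congrArg (rename (⇑(sw j))) g1
  have g1'' := congrArg (rename (⇑(sw i))) g1'
  simp only [map_mul, map_sub, r2, r3, rename_mul'] at g1' g1'' g2'
  have k1 := D_spec j f
  have k2 := D_spec i (D j f)
  have k3 := D_spec j (D i (D j f))
  have k2' := congrArg (rename (⇑(sw j))) k2
  rw [map_mul, map_sub, r2, rename_D] at k2'
  have k1' := congrArg (rename (⇑(sw i))) k1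
  have k1'' := congrArg (rename (⇑(sw j))) k1'
  simp only [map_mul, map_sub, r1, r4, rename_mul'] at k1' k1'' k2'
  rw [← mul_assoc, sw_braid h] at g1''
  rw [← mul_assoc] at k1''
  have G : F * (rt j * (rt i * D i (D j (D i f)))) = f - rename (⇑(sw i)) f - rename (⇑(sw j)) f
      + rename (⇑(sw j * sw i)) f + rename (⇑(sw i * sw j)) f
      - rename (⇑(sw j * sw i * sw j)) f := by
    rw [rF] at *
    linear_combination (rt i + rt j) * rt j * g3 + (rt i + rt j) * g2 - rt j * g2' + g1 - g1' + g1''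
  have K : F * (rt j * (rt i * D j (D i (D j f)))) = f - rename (⇑(sw i)) f - rename (⇑(sw j)) f
      + rename (⇑(sw j * sw i)) f + rename (⇑(sw i * sw j)) f
      - rename (⇑(sw j * sw i * sw j)) f := by
    rw [rF] at *
    linear_combination (rt i + rt j) * rt i * k3 + (rt i + rt j) * k2 - rt i * k2' + k1 - k1' + k1''
  rw [G, K]



theorem sw_val {n : ℕ} (i : Fin n) (p : Fin (n + 1)) :
    ((sw i p : Fin (n + 1)) : ℕ) =
      if (p : ℕ) = i then (i : ℕ) + 1 else if (p : ℕ) = i + 1 then (i : ℕ) else p := by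
  by_cases h1 : p = i.castSucc
  · subst h1; rw [sw_castSucc]; simp
  · by_cases h2 : p = i.succ
    · subst h2; rw [sw_succ]; simp
    · rw [sw_of_ne i h1 h2]
      have a1 : (p : ℕ) ≠ i := fun e => h1 (by ext; simpa using e)
      have a2 : (p : ℕ) ≠ i + 1 := fun e => h2 (by ext; simpa using e)
      simp [a1, a2]

theorem sw_lt {n : ℕ} (i : Fin n) {p q : Fin (n + 1)} (h : p < q)
    (hne : ¬ (p = i.castSucc ∧ q = i.succ)) : sw i p < sw i q := by
  rw [Fin.lt_def, sw_val, sw_val]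
  rw [Fin.lt_def] at h
  have : ¬ ((p : ℕ) = i ∧ (q : ℕ) = i + 1) := by
    rintro ⟨h1, h2⟩; exact hne ⟨by ext; simpa using h1, by ext; simpa using h2⟩
  split_ifs <;> omega

theorem len_sw_up {n : ℕ} (u : Equiv.Perm (Fin (n + 1))) (i : Fin n)
    (h : u i.castSucc < u i.succ) : len (u * sw i) = len u + 1 := by
  unfold len
  have key : (Finset.univ.filter fun p : Fin (n + 1) × Fin (n + 1) =>
        p.1 < p.2 ∧ (u * sw i) p.2 < (u * sw i) p.1) =
      insert (i.castSucc, i.succ) ((Finset.univ.filter fun p : Fin (n + 1) × Fin (n + 1) =>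
        p.1 < p.2 ∧ u p.2 < u p.1).map (Equiv.prodCongr (sw i) (sw i)).toEmbedding) := by
    ext ⟨p, q⟩
    rw [Finset.mem_insert, Finset.mem_map, Finset.mem_filter]
    simp only [Finset.mem_filter, Finset.mem_univ, true_and, Prod.mk.injEq]
    simp only [Equiv.Perm.mul_apply]
    constructor
    · rintro ⟨h1, h2⟩
      by_cases hc : p = i.castSucc ∧ q = i.succ
      · left; exact hc
      · right
        refine ⟨(sw i p, sw i q), ⟨sw_lt i h1 hc, h2⟩, ?_⟩
        simp [sw_sw]
    · rintro (⟨rfl, rfl⟩ | ⟨⟨p', q'⟩, ⟨h1, h2⟩, h3⟩)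
      · rw [sw_castSucc, sw_succ]; exact ⟨Fin.castSucc_lt_succ, h⟩
      · simp only [Equiv.coe_toEmbedding, Equiv.prodCongr_apply, Prod.map_apply,
          Prod.mk.injEq] at h3
        obtain ⟨rfl, rfl⟩ := h3
        rw [sw_sw, sw_sw]
        refine ⟨sw_lt i h1 ?_, h2⟩
        rintro ⟨rfl, rfl⟩
        exact absurd h2 (not_lt.mpr h.le)
  rw [key, Finset.card_insert_of_notMem, Finset.card_map]
  simp only [Finset.mem_map, Finset.mem_filter, Finset.mem_univ, true_and, not_exists, not_and]
  rintro ⟨p', q'⟩ ⟨h1, h2⟩ h3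
  simp only [Equiv.coe_toEmbedding, Equiv.prodCongr_apply, Prod.map_apply,
          Prod.mk.injEq] at h3
  have a1 : p' = i.succ := by rw [← sw_sw i p', h3.1, sw_castSucc]
  have a2 : q' = i.castSucc := by rw [← sw_sw i q', h3.2, sw_succ]
  simp only [a1, a2] at h1
  exact absurd h1 (not_lt.mpr Fin.castSucc_lt_succ.le)

theorem mul_sw_sw {n : ℕ} (u : Equiv.Perm (Fin (n + 1))) (i : Fin n) : u * sw i * sw i = u := by
  rw [mul_assoc, sw_mul_self, mul_one]

theorem len_sw_down {n : ℕ} (u : Equiv.Perm (Fin (n + 1))) (i : Fin n)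
    (h : u i.succ < u i.castSucc) : len u = len (u * sw i) + 1 := by
  have := len_sw_up (u * sw i) i (by
    rw [Equiv.Perm.mul_apply, Equiv.Perm.mul_apply, sw_castSucc, sw_succ]; exact h)
  rw [mul_sw_sw] at this; exact this

theorem asc_or_desc {n : ℕ} (u : Equiv.Perm (Fin (n + 1))) (i : Fin n) :
    u i.castSucc < u i.succ ∨ u i.succ < u i.castSucc := by
  rcases lt_trichotomy (u i.castSucc) (u i.succ) with h | h | h
  · exact Or.inl h
  · exact absurd (u.injective h) (cs_ne_succ i)
  · exact Or.inr h

theorem desc_iff {n : ℕ} (u : Equiv.Perm (Fin (n + 1))) (i : Fin n) :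
    u i.succ < u i.castSucc ↔ len u = len (u * sw i) + 1 := by
  constructor
  · exact len_sw_down u i
  · intro h
    rcases asc_or_desc u i with h1 | h1
    · have := len_sw_up u i h1; omega
    · exact h1

theorem asc_iff {n : ℕ} (u : Equiv.Perm (Fin (n + 1))) (i : Fin n) :
    u i.castSucc < u i.succ ↔ len (u * sw i) = len u + 1 := by
  constructor
  · exact len_sw_up u i
  · intro h
    rcases asc_or_desc u i with h1 | h1
    · exact h1
    · have := len_sw_down u i h1; omega

/-- swapping an inversion lowers the length -/
theorem len_swap_lt {n : ℕ} (d : ℕ) : ∀ (u : Equiv.Perm (Fin (n + 1))) (p q : Fin (n + 1)),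
    (q : ℕ) = p + d + 1 → u q < u p → len (u * Equiv.swap p q) < len u := by
  induction d with
  | zero =>
    intro u p q hd h
    have hp : (p : ℕ) < n := by omega
    have e1 : p = (⟨p, hp⟩ : Fin n).castSucc := by ext; simp
    have e2 : q = (⟨p, hp⟩ : Fin n).succ := by ext; simp [hd]
    rw [e1, e2] at h
    have := len_sw_down u _ h
    rw [e1, e2]
    unfold sw at this
    omega
  | succ d ih =>
    intro u p q hd h
    have hp : (p : ℕ) < n := by omega
    set i : Fin n := ⟨p, hp⟩ with hi
    have e1 : p = i.castSucc := by ext; simp [hi]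
    have hj : (i.succ : ℕ) = p + 1 := by simp [hi]
    have hqp : q ≠ p := fun e => by rw [e] at hd; omega
    have hqj : q ≠ i.succ := fun e => by rw [e, hj] at hd; omega
    have hpj : p ≠ i.succ := by rw [e1]; exact cs_ne_succ i
    have hsw : sw i = Equiv.swap p i.succ := by rw [e1]; rfl
    have hconj : Equiv.swap p q = sw i * Equiv.swap i.succ q * sw i := by
      rw [hsw]
      have := Equiv.swap_mul_swap_mul_swap hqj hqp
      rw [Equiv.swap_comm p i.succ, Equiv.swap_comm i.succ q, this]
    have hu2 : u * Equiv.swap p q = u * sw i * Equiv.swap i.succ q * sw i := by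
      rw [hconj]; simp only [mul_assoc]
    have v1 : (u * sw i) i.succ = u p := by rw [Equiv.Perm.mul_apply, sw_succ, e1]
    have v2 : (u * sw i) q = u q := by
      rw [Equiv.Perm.mul_apply, sw_of_ne i (by rw [← e1]; exact hqp) hqj]
    have st := ih (u * sw i) i.succ q (by omega) (by rw [v1, v2]; exact h)
    set v := u * sw i * Equiv.swap i.succ q with hv
    have w1 : v i.castSucc = u i.succ := by
      rw [hv, Equiv.Perm.mul_apply, Equiv.swap_apply_of_ne_of_ne (cs_ne_succ i)
        (by rw [← e1]; exact hqp.symm), Equiv.Perm.mul_apply, sw_castSucc]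
    have w2 : v i.succ = u q := by
      rw [hv, Equiv.Perm.mul_apply, Equiv.swap_apply_left, v2]
    rw [hu2]
    rcases asc_or_desc u i with g1 | g1
    · have := len_sw_up u i g1
      have g2 : v i.succ < v i.castSucc := by
        rw [w1, w2]; rw [← e1] at g1; exact h.trans g1
      have := len_sw_down v i g2
      omega
    · have := len_sw_down u i g1
      rcases asc_or_desc v i with g2 | g2
      · have := len_sw_up v i g2
        omega
      · have := len_sw_down v i g2
        omega

theorem len_swap_lt' {n : ℕ} (u : Equiv.Perm (Fin (n + 1))) {p q : Fin (n + 1)}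
    (hpq : p < q) (h : u q < u p) : len (u * Equiv.swap p q) < len u :=
  len_swap_lt (q - p - 1) u p q (by rw [Fin.lt_def] at hpq; omega) h

theorem len_swap_gt' {n : ℕ} (u : Equiv.Perm (Fin (n + 1))) {p q : Fin (n + 1)}
    (hpq : p < q) (h : u p < u q) : len u < len (u * Equiv.swap p q) := by
  have := len_swap_lt' (u * Equiv.swap p q) hpq (by simpa using h)
  rwa [mul_assoc, Equiv.swap_mul_self, mul_one] at this

/-- a between entry means a drop of at least three -/
theorem len_swap_between {n : ℕ} (u : Equiv.Perm (Fin (n + 1))) {p j q : Fin (n + 1)}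
    (hpj : p < j) (hjq : j < q) (h1 : u q < u j) (h2 : u j < u p) :
    len (u * Equiv.swap p q) + 3 ≤ len u := by
  have hconj : Equiv.swap p q = Equiv.swap p j * Equiv.swap j q * Equiv.swap p j := by
    have := Equiv.swap_mul_swap_mul_swap hjq.ne' (hpj.trans hjq).ne'
    rw [Equiv.swap_comm p j, Equiv.swap_comm j q, this]
  have e : u * Equiv.swap p q = u * Equiv.swap p j * Equiv.swap j q * Equiv.swap p j := by
    rw [hconj]; simp only [mul_assoc]
  have a1 := len_swap_lt' u hpj h2
  have hqp := (hpj.trans hjq).ne'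
  have a2 := len_swap_lt' (u * Equiv.swap p j) hjq (by
    simp only [Equiv.Perm.mul_apply, Equiv.swap_apply_right,
      Equiv.swap_apply_of_ne_of_ne hqp hjq.ne']
    exact h1.trans h2)
  have a3 := len_swap_lt' (u * Equiv.swap p j * Equiv.swap j q) hpj (by
    simp only [Equiv.Perm.mul_apply, Equiv.swap_apply_left,
      Equiv.swap_apply_of_ne_of_ne hqp hjq.ne', Equiv.swap_apply_of_ne_of_ne hpj.ne hqp.symm]
    exact h1)
  rw [e]; omega

/-- no descents means identity -/
theorem eq_one_of_no_desc {n : ℕ} (u : Equiv.Perm (Fin (n + 1)))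
    (h : ∀ i : Fin n, ¬ u i.succ < u i.castSucc) : u = 1 := by
  have hm : StrictMono u := by
    rw [Fin.strictMono_iff_lt_succ]
    intro i
    rcases asc_or_desc u i with h1 | h1
    · exact h1
    · exact absurd h1 (h i)
  have hm' : StrictMono ⇑u⁻¹ := by
    intro x y hxy
    rw [← hm.lt_iff_lt]
    simpa using hxy
  refine Equiv.ext fun x => le_antisymm ?_ hm.le_apply
  have := hm'.le_apply (x := u x)
  simpa using this

theorem len_one {n : ℕ} : len (1 : Equiv.Perm (Fin (n + 1))) = 0 := by
  unfold len
  rw [Finset.card_eq_zero, Finset.filter_eq_empty_iff]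
  rintro ⟨p, q⟩ _ ⟨h1, h2⟩
  exact absurd h1 (not_lt.mpr (le_of_lt h2))

theorem eq_one_of_len {n : ℕ} (u : Equiv.Perm (Fin (n + 1))) (h : len u = 0) : u = 1 := by
  apply eq_one_of_no_desc
  intro i hi
  have := len_sw_down u i hi
  omega

theorem len_inv {n : ℕ} (u : Equiv.Perm (Fin (n + 1))) : len u⁻¹ = len u := by
  unfold len
  refine Finset.card_bij (fun p _ => (u⁻¹ p.2, u⁻¹ p.1)) ?_ ?_ ?_
  · rintro ⟨p, q⟩ h
    simpa using (And.comm.mp (by simpa using h))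
  · rintro ⟨p, q⟩ _ ⟨p', q'⟩ _ h
    simp only [Prod.mk.injEq, EmbeddingLike.apply_eq_iff_eq] at h
    simp [h.1, h.2]
  · rintro ⟨p, q⟩ h
    refine ⟨(u q, u p), ?_, by simp⟩
    simpa using (And.comm.mp (by simpa using h))

theorem len_le {n : ℕ} (u : Equiv.Perm (Fin (n + 1))) : len u ≤ (n + 1) * (n + 1) := by
  unfold len
  refine (Finset.card_le_univ _).trans ?_
  simp


noncomputable def opF {n : ℕ} : ℕ → Equiv.Perm (Fin (n + 1)) →
    (MvPolynomial (Fin (n + 1)) ℤ →ₗ[ℤ] MvPolynomial (Fin (n + 1)) ℤ)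
  | 0, _ => LinearMap.id
  | L + 1, w => if h : ∃ i : Fin n, w i.succ < w i.castSucc then
      (opF L (w * sw h.choose)) ∘ₗ (D h.choose) else LinearMap.id

/-- the divided difference operator of a permutation -/
noncomputable def op {n : ℕ} (w : Equiv.Perm (Fin (n + 1))) :
    MvPolynomial (Fin (n + 1)) ℤ →ₗ[ℤ] MvPolynomial (Fin (n + 1)) ℤ := opF (len w) w

theorem op_one {n : ℕ} (f : MvPolynomial (Fin (n + 1)) ℤ) : op 1 f = f := by
  unfold op; rw [len_one]; rfl

theorem op_choose {n : ℕ} (w : Equiv.Perm (Fin (n + 1)))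
    (h : ∃ i : Fin n, w i.succ < w i.castSucc) (f : MvPolynomial (Fin (n + 1)) ℤ) :
    op w f = op (w * sw h.choose) (D h.choose f) := by
  have := len_sw_down w _ h.choose_spec
  unfold op
  rw [this]
  conv_lhs => rw [opF]
  rw [dif_pos h]
  rfl

theorem op_pair {n : ℕ} (w : Equiv.Perm (Fin (n + 1)))
    (ih : ∀ v : Equiv.Perm (Fin (n + 1)), len v < len w → ∀ j : Fin n, v j.succ < v j.castSucc →
      ∀ f, op v f = op (v * sw j) (D j f)) (i j : Fin n) (hij : i < j)
    (hi : w i.succ < w i.castSucc) (hj : w j.succ < w j.castSucc)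
    (f : MvPolynomial (Fin (n + 1)) ℤ) : op (w * sw i) (D i f) = op (w * sw j) (D j f) := by
  have li := len_sw_down w i hi
  have lj := len_sw_down w j hj
  rw [Fin.lt_def] at hij
  rcases Nat.lt_or_ge ((i : ℕ) + 1) j with h | h
  · have a1 : sw i j.castSucc = j.castSucc := by
      apply sw_of_ne <;> · intro e; have := congrArg Fin.val e; simp at this; omega
    have a2 : sw i j.succ = j.succ := by
      apply sw_of_ne <;> · intro e; have := congrArg Fin.val e; simp at this; omega
    have b1 : sw j i.castSucc = i.castSucc := by
      apply sw_of_ne <;> · intro e; have := congrArg Fin.val e; simp at this; omega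
    have b2 : sw j i.succ = i.succ := by
      apply sw_of_ne <;> · intro e; have := congrArg Fin.val e; simp at this; omega
    rw [ih (w * sw i) (by omega) j (by simpa [Equiv.Perm.mul_apply, a1, a2] using hj),
      ih (w * sw j) (by omega) i (by simpa [Equiv.Perm.mul_apply, b1, b2] using hi),
      mul_assoc, mul_assoc, sw_comm h, D_comm h]
  · have h : (i : ℕ) + 1 = j := by omega
    have e : i.succ = j.castSucc := by ext; simpa using h
    have h13 : i.castSucc ≠ j.succ := by
      intro e; have := congrArg Fin.val e; simp at this; omega
    have b1 : sw j i.castSucc = i.castSucc := by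
      apply sw_of_ne
      · rw [← e]; exact cs_ne_succ i
      · exact h13
    have b2 : sw i j.succ = j.succ := by
      apply sw_of_ne
      · exact h13.symm
      · rw [e]; exact (cs_ne_succ j).symm
    have c1 : sw i i.castSucc = j.castSucc := by rw [sw_castSucc, e]
    have c2 : sw i j.castSucc = i.castSucc := by rw [← e, sw_succ]
    have c3 : sw j j.castSucc = j.succ := sw_castSucc j
    have c4 : sw j j.succ = j.castSucc := sw_succ j
    rw [e] at hi
    have d1 : (w * sw i) j.succ < (w * sw i) j.castSucc := by
      simp only [Equiv.Perm.mul_apply, b2, c2]; exact hj.trans hi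
    have d2 : (w * sw i * sw j) i.succ < (w * sw i * sw j) i.castSucc := by
      simp only [Equiv.Perm.mul_apply, e, b1, b2, c1, c2, c3]; exact hj
    have d3 : (w * sw j) i.succ < (w * sw j) i.castSucc := by
      simp only [Equiv.Perm.mul_apply, e, b1, c3]; exact hj.trans hi
    have d4 : (w * sw j * sw i) j.succ < (w * sw j * sw i) j.castSucc := by
      simp only [Equiv.Perm.mul_apply, b1, b2, c2, c4]; exact hi
    have l1 := len_sw_down _ _ d1
    have l3 := len_sw_down _ _ d3
    rw [ih (w * sw i) (by omega) j d1, ih (w * sw i * sw j) (by omega) i d2,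
      ih (w * sw j) (by omega) i d3, ih (w * sw j * sw i) (by omega) j d4, D_braid h]
    have := sw_braid h
    simp only [mul_assoc] at this ⊢
    rw [this]

theorem op_desc {n : ℕ} (w : Equiv.Perm (Fin (n + 1))) (j : Fin n)
    (hj : w j.succ < w j.castSucc) (f : MvPolynomial (Fin (n + 1)) ℤ) :
    op w f = op (w * sw j) (D j f) := by
  suffices H : ∀ L, ∀ w : Equiv.Perm (Fin (n + 1)), len w < L → ∀ j : Fin n,
      w j.succ < w j.castSucc → ∀ f, op w f = op (w * sw j) (D j f) from
    H _ w (Nat.lt_succ_self _) j hj f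
  intro L
  induction L with
  | zero => intro w h; omega
  | succ L ih =>
    intro w hw j hj f
    have hex : ∃ i : Fin n, w i.succ < w i.castSucc := ⟨j, hj⟩
    rw [op_choose w hex]
    have ih' : ∀ v : Equiv.Perm (Fin (n + 1)), len v < len w → ∀ j : Fin n,
      v j.succ < v j.castSucc → ∀ f, op v f = op (v * sw j) (D j f) :=
      fun v hv => ih v (by omega)
    rcases lt_trichotomy hex.choose j with h | h | h
    · exact op_pair w ih' _ _ h hex.choose_spec hj f
    · rw [h]
    · exact (op_pair w ih' _ _ h hj hex.choose_spec f).symm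

theorem op_mul_D_asc {n : ℕ} (w : Equiv.Perm (Fin (n + 1))) (j : Fin n)
    (hj : w j.castSucc < w j.succ) (f : MvPolynomial (Fin (n + 1)) ℤ) :
    op w (D j f) = op (w * sw j) f := by
  rw [op_desc (w * sw j) j, mul_sw_sw]
  simpa [Equiv.Perm.mul_apply, sw_succ, sw_castSucc] using hj

theorem op_mul_D_desc {n : ℕ} (w : Equiv.Perm (Fin (n + 1))) (j : Fin n)
    (hj : w j.succ < w j.castSucc) (f : MvPolynomial (Fin (n + 1)) ℤ) :
    op w (D j f) = 0 := by
  rw [op_desc w j hj, D_D, map_zero]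

theorem op_induction {n : ℕ} {Q : Equiv.Perm (Fin (n + 1)) → Prop} (h1 : Q 1)
    (hs : ∀ w (i : Fin n), w i.succ < w i.castSucc → Q (w * sw i) → Q w) : ∀ w, Q w := by
  suffices H : ∀ L, ∀ w : Equiv.Perm (Fin (n + 1)), len w < L → Q w from
    fun w => H _ w (Nat.lt_succ_self _)
  intro L
  induction L with
  | zero => intro w h; omega
  | succ L ih =>
    intro w hw
    by_cases h : ∃ i : Fin n, w i.succ < w i.castSucc
    · obtain ⟨i, hi⟩ := h
      have := len_sw_down w i hi
      exact hs w i hi (ih _ (by omega))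
    · push Not at h
      rw [eq_one_of_no_desc w (fun i => not_lt.mpr (h i))]; exact h1

theorem len_sw_mul {n : ℕ} (w : Equiv.Perm (Fin (n + 1))) (i : Fin n) :
    len (sw i * w) = len (w⁻¹ * sw i) := by
  rw [← len_inv, mul_inv_rev]; congr 2

theorem D_op_up {n : ℕ} (i : Fin n) (w : Equiv.Perm (Fin (n + 1))) :
    len (sw i * w) = len w + 1 → ∀ f, D i (op w f) = op (sw i * w) f := by
  induction w using op_induction with
  | h1 =>
    intro _ f
    rw [op_one, mul_one, op_desc (sw i) i (by rw [sw_succ, sw_castSucc]; exact Fin.castSucc_lt_succ),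
      sw_mul_self, op_one]
  | hs w j hj ih =>
    intro hl f
    have l1 := len_sw_down w j hj
    have hu : sw i * (w * sw j) * sw j = sw i * w := by rw [← mul_assoc, mul_sw_sw]
    have l2 : len (sw i * (w * sw j)) = len (w * sw j) + 1 := by
      have e1 : len (sw i * (w * sw j)) ≤ len (w * sw j) + 1 := by
        rw [len_sw_mul, ← len_inv (w * sw j)]
        rcases asc_or_desc (w * sw j)⁻¹ i with h | h
        · rw [len_sw_up _ i h]
        · have := len_sw_down _ i h; omega
      have e2 : len (sw i * w) ≤ len (sw i * (w * sw j)) + 1 := by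
        rw [← hu]
        rcases asc_or_desc (sw i * (w * sw j)) j with h | h
        · rw [len_sw_up _ j h]
        · have := len_sw_down _ j h; omega
      omega
    rw [op_desc w j hj, ih l2, op_mul_D_asc, hu]
    rw [asc_iff, hu]
    omega

theorem D_op_down {n : ℕ} (i : Fin n) (w : Equiv.Perm (Fin (n + 1)))
    (h : len w = len (sw i * w) + 1) (f) : D i (op w f) = 0 := by
  have e : sw i * (sw i * w) = w := by rw [← mul_assoc, sw_mul_self, one_mul]
  have := D_op_up i (sw i * w) (by rw [e]; exact h) f
  rw [e] at this
  rw [← this, D_D]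

theorem fix_desc {n : ℕ} {K : ℕ} {w : Equiv.Perm (Fin (n + 1))}
    (hw : ∀ p : Fin (n + 1), K ≤ (p : ℕ) → w p = p) {i : Fin n} (hi : w i.succ < w i.castSucc) :
    (i : ℕ) + 1 < K := by
  by_contra hK
  push Not at hK
  rw [hw i.succ (by simpa using hK)] at hi
  rcases Nat.lt_or_ge (i : ℕ) K with h | h
  · have : K ≤ (w i.castSucc : ℕ) := by rw [Fin.lt_def] at hi; simp at hi; omega
    have := w.injective (hw _ this)
    rw [this] at hi
    exact absurd hi (not_lt.mpr Fin.castSucc_lt_succ.le)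
  · rw [hw i.castSucc (by simpa using h)] at hi
    exact absurd hi (not_lt.mpr Fin.castSucc_lt_succ.le)

theorem fix_mul_sw {n : ℕ} {K : ℕ} {w : Equiv.Perm (Fin (n + 1))}
    (hw : ∀ p : Fin (n + 1), K ≤ (p : ℕ) → w p = p) {i : Fin n} (hi : (i : ℕ) + 1 < K) :
    ∀ p : Fin (n + 1), K ≤ (p : ℕ) → (w * sw i) p = p := by
  intro p hp
  rw [Equiv.Perm.mul_apply, sw_of_ne, hw p hp]
  · intro e; rw [e] at hp; simp at hp; omega
  · intro e; rw [e] at hp; simp at hp; omega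

theorem op_mul_of_inv {n : ℕ} (K : ℕ) {g : MvPolynomial (Fin (n + 1)) ℤ}
    (hg : ∀ i : Fin n, (i : ℕ) + 1 < K → rename (⇑(sw i)) g = g) (f : MvPolynomial (Fin (n + 1)) ℤ)
    (w : Equiv.Perm (Fin (n + 1))) : (∀ p : Fin (n + 1), K ≤ (p : ℕ) → w p = p) →
    op w (g * f) = g * op w f := by
  induction w using op_induction generalizing f with
  | h1 => intro _; rw [op_one, op_one]
  | hs w i hi ih =>
    intro hw
    have hK := fix_desc hw hi
    rw [op_desc w i hi, D_mul_of_inv i (hg i hK), ih _ (fix_mul_sw hw hK), op_desc w i hi]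

theorem cover_desc {n : ℕ} {u : Equiv.Perm (Fin (n + 1))} {i : Fin n}
    (hi : u i.succ < u i.castSucc) {p q : Fin (n + 1)} (hpq : p < q)
    (hne : ¬ (p = i.castSucc ∧ q = i.succ)) (hl : len (u * Equiv.swap p q) + 1 = len u) :
    (u * Equiv.swap p q) i.succ < (u * Equiv.swap p q) i.castSucc := by
  have hinv : u q < u p := by
    rcases lt_trichotomy (u p) (u q) with h | h | h
    · have := len_swap_gt' u hpq h; omega
    · exact absurd (u.injective h) hpq.ne
    · exact h
  have hb : ∀ j, p < j → j < q → u q < u j → u j < u p → False := by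
    intro j h1 h2 h3 h4
    have := len_swap_between u h1 h2 h3 h4
    omega
  simp only [Equiv.Perm.mul_apply]
  have hcs : (i.castSucc : Fin (n + 1)) < i.succ := Fin.castSucc_lt_succ
  have hne' : i.castSucc ≠ i.succ := hcs.ne
  by_cases h1 : p = i.castSucc
  · have h2 : q ≠ i.succ := fun e => hne ⟨h1, e⟩
    have hq : i.succ < q := lt_of_le_of_ne (by
      rw [h1, Fin.lt_def] at hpq; rw [Fin.le_def]; simpa using hpq) h2.symm
    subst h1
    rw [Equiv.swap_apply_left, Equiv.swap_apply_of_ne_of_ne hne'.symm h2.symm]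
    by_contra hc
    have hc' : u q < u i.succ := lt_of_le_of_ne (not_lt.mp hc) (fun e => h2 (u.injective e))
    exact hb i.succ hcs hq hc' hi
  · by_cases h2 : p = i.succ
    · subst h2
      rw [Equiv.swap_apply_left, Equiv.swap_apply_of_ne_of_ne hne' (hcs.trans hpq).ne]
      exact hinv.trans hi
    · by_cases h3 : q = i.castSucc
      · subst h3
        rw [Equiv.swap_apply_right, Equiv.swap_apply_of_ne_of_ne (hpq.trans hcs).ne' hne'.symm]
        exact hi.trans hinv
      · by_cases h4 : q = i.succ
        · subst h4
          have hp : p < i.castSucc := lt_of_le_of_ne (by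
            rw [Fin.lt_def] at hpq; rw [Fin.le_def]; simp at hpq ⊢; omega) h1
          rw [Equiv.swap_apply_right, Equiv.swap_apply_of_ne_of_ne (Ne.symm h1) hne']
          by_contra hc
          have hc' : u i.castSucc < u p :=
            lt_of_le_of_ne (not_lt.mp hc) (fun e => h1 (u.injective e).symm)
          exact hb i.castSucc hp hcs hi hc'
        · rw [Equiv.swap_apply_of_ne_of_ne (Ne.symm h2) (Ne.symm h4),
            Equiv.swap_apply_of_ne_of_ne (Ne.symm h1) (Ne.symm h3)]
          exact hi

/-- sign attached to an ordered pair of positions -/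
def sg {n : ℕ} (b l : Fin (n + 1)) : ℤ := if b < l then 1 else -1

noncomputable def mterm {n : ℕ} (u : Equiv.Perm (Fin (n + 1))) (b : Fin (n + 1))
    (f : MvPolynomial (Fin (n + 1)) ℤ) (l : Fin (n + 1)) : MvPolynomial (Fin (n + 1)) ℤ :=
  if len (u * Equiv.swap b l) + 1 = len u then sg b l • op (u * Equiv.swap b l) f else 0

theorem swap_sw_conj {n : ℕ} (i : Fin n) (b l : Fin (n + 1)) :
    Equiv.swap (sw i b) (sw i l) = sw i * Equiv.swap b l * sw i := by
  have := Equiv.mul_swap_eq_swap_mul (sw i) b l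
  rw [this, mul_assoc, sw_mul_self, mul_one]

theorem mterm_step {n : ℕ} (u : Equiv.Perm (Fin (n + 1))) (b : Fin (n + 1)) (i : Fin n)
    (hi : u i.succ < u i.castSucc) (f : MvPolynomial (Fin (n + 1)) ℤ) (l : Fin (n + 1)) :
    mterm u b f l = mterm (u * sw i) (sw i b) (D i f) (sw i l)
      + (if l = i.succ then (if b = i.castSucc then op (u * sw i) f else 0) else 0)
      - (if l = i.castSucc then (if b = i.succ then op (u * sw i) f else 0) else 0) := by
  have lu := len_sw_down u i hi
  have hne : i.castSucc ≠ i.succ := cs_ne_succ i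
  have hcs : (i.castSucc : Fin (n + 1)) < i.succ := Fin.castSucc_lt_succ
  have hE : u * sw i * Equiv.swap (sw i b) (sw i l) = u * Equiv.swap b l * sw i := by
    rw [swap_sw_conj]
    simp only [← mul_assoc]; rw [mul_sw_sw]
  unfold mterm
  rw [hE]
  by_cases c1 : b = i.castSucc ∧ l = i.succ
  · obtain ⟨rfl, rfl⟩ := c1
    have : Equiv.swap i.castSucc i.succ = sw i := rfl
    rw [this, mul_sw_sw, if_pos lu.symm, if_neg (by omega), if_pos rfl, if_pos rfl,
      if_neg hne.symm]
    simp [sg, hcs]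
  by_cases c2 : b = i.succ ∧ l = i.castSucc
  · obtain ⟨rfl, rfl⟩ := c2
    have : Equiv.swap i.succ i.castSucc = sw i := Equiv.swap_comm _ _
    rw [this, mul_sw_sw, if_pos lu.symm, if_neg (by omega), if_neg hne, if_pos rfl, if_pos rfl]
    simp [sg, hcs.le]
  have z1 : (if l = i.succ then (if b = i.castSucc then op (u * sw i) f else 0) else 0) = 0 := by
    split_ifs with h1 h2
    · exact absurd ⟨h2, h1⟩ c1
    · rfl
    · rfl
  have z2 : (if l = i.castSucc then (if b = i.succ then op (u * sw i) f else 0) else 0) = 0 := by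
    split_ifs with h1 h2
    · exact absurd ⟨h2, h1⟩ c2
    · rfl
    · rfl
  rw [z1, z2, add_zero, sub_zero]
  by_cases hbl : b = l
  · subst hbl
    have : Equiv.swap b b = 1 := Equiv.swap_self b
    rw [this, mul_one, if_neg (by omega), if_neg (by omega)]
  have hsg : sg (sw i b) (sw i l) = sg b l := by
    unfold sg
    rcases lt_or_gt_of_ne hbl with h | h
    · rw [if_pos h, if_pos (sw_lt i h c1)]
    · rw [if_neg (not_lt.mpr h.le), if_neg (not_lt.mpr (sw_lt i h (fun e => c2 ⟨e.2, e.1⟩)).le)]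
  rw [hsg]
  set v := u * Equiv.swap b l with hv
  have hd : len v + 1 = len u → v i.succ < v i.castSucc := by
    intro h
    rcases lt_or_gt_of_ne hbl with h' | h'
    · exact cover_desc hi h' c1 h
    · rw [hv, Equiv.swap_comm] at h ⊢
      exact cover_desc hi h' (fun e => c2 ⟨e.2, e.1⟩) h
  rcases asc_or_desc v i with h | h
  · rw [if_neg (fun e => absurd (hd e) (not_lt.mpr h.le))]
    have : op (v * sw i) (D i f) = 0 := by
      apply op_mul_D_desc
      simpa [Equiv.Perm.mul_apply, sw_succ, sw_castSucc] using h
    rw [this, smul_zero, ite_self]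
  · have lv := len_sw_down v i h
    rw [op_desc v i h]
    by_cases h2 : len v + 1 = len u
    · rw [if_pos h2, if_pos (by omega)]
    · rw [if_neg h2, if_neg (by omega)]

theorem op_X_mul {n : ℕ} (u : Equiv.Perm (Fin (n + 1))) : ∀ (b : Fin (n + 1))
    (f : MvPolynomial (Fin (n + 1)) ℤ),
    op u (X b * f) = X (u b) * op u f + ∑ l, mterm u b f l := by
  induction u using op_induction with
  | h1 =>
    intro b f
    rw [op_one, op_one, Finset.sum_eq_zero, add_zero]
    · rfl
    · intro l _
      unfold mterm
      rw [len_one, if_neg (by omega)]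
  | hs u i hi ih =>
    intro b f
    have h1 : ∑ l, mterm u b f l = ∑ l, mterm (u * sw i) (sw i b) (D i f) l
        + (if b = i.castSucc then op (u * sw i) f else 0)
        - (if b = i.succ then op (u * sw i) f else 0) := by
      rw [Finset.sum_congr rfl (fun l _ => mterm_step u b i hi f l)]
      rw [Finset.sum_sub_distrib, Finset.sum_add_distrib, Finset.sum_ite_eq', Finset.sum_ite_eq',
        Equiv.sum_comp (sw i) (fun l => mterm (u * sw i) (sw i b) (D i f) l)]
      simp
    rw [h1, op_desc u i hi (X b * f), D_X_mul, map_sub, map_add, ih, Equiv.Perm.mul_apply, sw_sw,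
      ← op_desc u i hi]
    have e1 : op (u * sw i) (if b = i.castSucc then f else 0) =
        if b = i.castSucc then op (u * sw i) f else 0 := by split_ifs <;> simp
    have e2 : op (u * sw i) (if b = i.succ then f else 0) =
        if b = i.succ then op (u * sw i) f else 0 := by split_ifs <;> simp
    rw [e1, e2]
    ring

/-- coefficient functional -/
noncomputable def cf {n : ℕ} (u : Equiv.Perm (Fin (n + 1))) (f : MvPolynomial (Fin (n + 1)) ℤ) : ℤ :=
  constantCoeff (op u f)

theorem cf_add {n : ℕ} (u : Equiv.Perm (Fin (n + 1))) (f g : MvPolynomial (Fin (n + 1)) ℤ) :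
    cf u (f + g) = cf u f + cf u g := by unfold cf; rw [map_add, map_add]

theorem cf_sub {n : ℕ} (u : Equiv.Perm (Fin (n + 1))) (f g : MvPolynomial (Fin (n + 1)) ℤ) :
    cf u (f - g) = cf u f - cf u g := by unfold cf; rw [map_sub, map_sub]

theorem cf_smul {n : ℕ} (u : Equiv.Perm (Fin (n + 1))) (c : ℤ) (g : MvPolynomial (Fin (n + 1)) ℤ) :
    cf u (c • g) = c * cf u g := by
  unfold cf; rw [map_smul, map_zsmul, smul_eq_mul]

theorem cf_sum {n : ℕ} {ι : Type*} (u : Equiv.Perm (Fin (n + 1))) (s : Finset ι)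
    (F : ι → MvPolynomial (Fin (n + 1)) ℤ) :
    cf u (∑ x ∈ s, F x) = ∑ x ∈ s, cf u (F x) := by
  unfold cf; rw [map_sum, map_sum]

theorem cf_neg {n : ℕ} (u : Equiv.Perm (Fin (n + 1))) (f : MvPolynomial (Fin (n + 1)) ℤ) :
    cf u (-f) = - cf u f := by unfold cf; rw [map_neg, map_neg]

/-- dual Monk formula -/
theorem cf_X_mul {n : ℕ} (u : Equiv.Perm (Fin (n + 1))) (b : Fin (n + 1))
    (f : MvPolynomial (Fin (n + 1)) ℤ) :
    cf u (X b * f) = ∑ l, if len (u * Equiv.swap b l) + 1 = len u then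
      sg b l * cf (u * Equiv.swap b l) f else 0 := by
  unfold cf
  rw [op_X_mul, map_add, map_mul, constantCoeff_X, zero_mul, zero_add, map_sum]
  refine Finset.sum_congr rfl fun l _ => ?_
  unfold mterm
  split_ifs
  · rw [map_zsmul, smul_eq_mul]
  · simp

theorem cf_mul_zero {n : ℕ} {g : MvPolynomial (Fin (n + 1)) ℤ} (hg : ∀ u, cf u g = 0)
    (f : MvPolynomial (Fin (n + 1)) ℤ) : ∀ u, cf u (f * g) = 0 := by
  induction f using MvPolynomial.induction_on with
  | C a =>
    intro u
    rw [← MvPolynomial.smul_eq_C_mul, cf_smul, hg, mul_zero]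
  | add p q hp hq => intro u; rw [add_mul, cf_add, hp, hq, add_zero]
  | mul_X p i hp =>
    intro u
    rw [mul_comm p, mul_assoc, cf_X_mul]
    refine Finset.sum_eq_zero fun l _ => ?_
    rw [hp, mul_zero, ite_self]


set_option linter.unusedSimpArgs false
theorem divDiffWord_redWordAux {n : ℕ} (fuel : ℕ) : ∀ (w : Equiv.Perm (Fin (n + 1))),
    len w ≤ fuel → ∀ f, divDiffWord (redWordAux (n + 1) fuel w) f = op w f := by
  induction fuel with
  | zero =>
    intro w hw f
    rw [eq_one_of_len w (by omega), op_one]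
    rfl
  | succ fuel ih =>
    intro w hw f
    unfold redWordAux
    split
    · rename_i hnone
      rw [List.find?_eq_none] at hnone
      rw [eq_one_of_no_desc w, op_one]
      · rfl
      · intro i hi
        have := hnone ((i : ℕ) + 1) (by
          simp)
        apply this
        simp only [decide_eq_true_eq]
        unfold val
        rw [pos_castSucc, pos_succ]
        rw [Fin.lt_def] at hi; omega
    · rename_i j hsome
      have h1 := List.find?_some hsome
      have h2 := List.mem_of_find?_eq_some hsome
      simp only [decide_eq_true_eq] at h1
      rw [List.mem_map] at h2
      obtain ⟨i0, hi0, rfl⟩ := h2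
      rw [List.mem_range] at hi0
      obtain ⟨i, rfl⟩ : ∃ i : Fin n, i0 = (i : ℕ) := ⟨⟨i0, by simpa using hi0⟩, rfl⟩
      have hd : w i.succ < w i.castSucc := by
        unfold val at h1
        rw [pos_castSucc, pos_succ] at h1
        rw [Fin.lt_def]; omega
      rw [t_eq_sw, op_desc w i hd]
      unfold divDiffWord
      rw [List.foldr_append]
      simp only [List.foldr_cons, List.foldr_nil]
      rw [divDiff_eq]
      have := len_sw_down w i hd
      exact ih _ (by omega) _

/-- our working Schubert polynomials -/
noncomputable def Sch {n : ℕ} (w : Equiv.Perm (Fin (n + 1))) : MvPolynomial (Fin (n + 1)) ℤ :=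
  op (w⁻¹ * w0 (n + 1)) (staircase (n + 1))

theorem schubertPoly_eq {n : ℕ} (w : Equiv.Perm (Fin (n + 1))) :
    schubertPoly (n + 1) w = Sch w :=
  divDiffWord_redWordAux _ _ (len_le _) _

theorem w0_apply {n : ℕ} (p : Fin (n + 1)) : w0 (n + 1) p = Fin.rev p := rfl

theorem w0_inv {n : ℕ} : (w0 (n + 1))⁻¹ = w0 (n + 1) := rfl

theorem w0_mul_self {n : ℕ} : w0 (n + 1) * w0 (n + 1) = 1 := by
  ext p; simp [w0_apply]

theorem D_Sch_desc {n : ℕ} (w : Equiv.Perm (Fin (n + 1))) (i : Fin n)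
    (h : w i.succ < w i.castSucc) : D i (Sch w) = Sch (w * sw i) := by
  unfold Sch
  have e : sw i * (w⁻¹ * w0 (n + 1)) = (w * sw i)⁻¹ * w0 (n + 1) := by
    rw [mul_inv_rev, mul_assoc]; rfl
  rw [← e]
  apply D_op_up
  rw [len_sw_mul, ← len_inv (w⁻¹ * w0 (n + 1))]
  apply len_sw_up
  rw [mul_inv_rev, inv_inv, w0_inv, Equiv.Perm.mul_apply, Equiv.Perm.mul_apply, w0_apply, w0_apply]
  exact Fin.rev_lt_rev.mpr h

theorem D_Sch_asc {n : ℕ} (w : Equiv.Perm (Fin (n + 1))) (i : Fin n)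
    (h : w i.castSucc < w i.succ) : D i (Sch w) = 0 := by
  have e : w = w * sw i * sw i := (mul_sw_sw w i).symm
  rw [e, ← D_Sch_desc (w * sw i), D_D]
  rw [Equiv.Perm.mul_apply, Equiv.Perm.mul_apply, sw_succ, sw_castSucc]; exact h

theorem eq_w0_of_no_asc {n : ℕ} (u : Equiv.Perm (Fin (n + 1)))
    (h : ∀ i : Fin n, ¬ u i.castSucc < u i.succ) : u = w0 (n + 1) := by
  have : w0 (n + 1) * u = 1 := by
    apply eq_one_of_no_desc
    intro i hi
    rw [Equiv.Perm.mul_apply, Equiv.Perm.mul_apply, w0_apply, w0_apply] at hi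
    exact h i (Fin.rev_lt_rev.mp hi)
  rw [← one_mul u, ← w0_mul_self, mul_assoc, this, mul_one]

theorem len_lt_w0 {n : ℕ} (u : Equiv.Perm (Fin (n + 1))) (h : u ≠ w0 (n + 1)) :
    len u < len (w0 (n + 1)) := by
  have : ∃ i : Fin n, u i.castSucc < u i.succ := by
    by_contra hc; push Not at hc
    exact h (eq_w0_of_no_asc u fun i => not_lt.mpr (hc i))
  obtain ⟨i, hi⟩ := this
  unfold len
  apply Finset.card_lt_card
  rw [Finset.ssubset_iff_of_subset]
  · refine ⟨(i.castSucc, i.succ), ?_, ?_⟩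
    · simp [w0_apply, Fin.castSucc_lt_succ, Fin.rev_lt_rev]
    · simp [hi.le]
  · rintro ⟨p, q⟩ hp
    simp [w0_apply, Fin.rev_lt_rev] at hp ⊢
    exact hp.1

/-- Lehmer code -/
def code {n : ℕ} (v : Equiv.Perm (Fin (n + 1))) (p : Fin (n + 1)) : ℕ :=
  (Finset.univ.filter fun j : Fin (n + 1) => p < j ∧ v j < v p).card

theorem code_desc {n : ℕ} (v : Equiv.Perm (Fin (n + 1))) (i : Fin n)
    (h : v i.succ < v i.castSucc) : code v i.succ < code v i.castSucc := by
  unfold code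
  apply Finset.card_lt_card
  rw [Finset.ssubset_iff_of_subset]
  · exact ⟨i.succ, by simp [h, Fin.castSucc_lt_succ], by simp⟩
  · intro j hj
    simp only [Finset.mem_filter, Finset.mem_univ, true_and] at hj ⊢
    exact ⟨Fin.castSucc_lt_succ.trans hj.1, hj.2.trans h⟩

theorem code_asc {n : ℕ} (v : Equiv.Perm (Fin (n + 1))) (i : Fin n)
    (h : v i.castSucc < v i.succ) : code v i.castSucc ≤ code v i.succ := by
  unfold code
  apply Finset.card_le_card
  intro j hj
  simp only [Finset.mem_filter, Finset.mem_univ, true_and] at hj ⊢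
  refine ⟨?_, hj.2.trans h⟩
  have : j ≠ i.succ := by rintro rfl; exact absurd hj.2 (not_lt.mpr h.le)
  have h1 := hj.1
  rw [Fin.lt_def] at h1 ⊢
  have : (j : ℕ) ≠ i.succ := fun e => this (Fin.ext e)
  simp at *; omega

theorem code_sw {n : ℕ} (v : Equiv.Perm (Fin (n + 1))) (i : Fin n)
    (h : v i.castSucc < v i.succ) (p : Fin (n + 1)) :
    code (v * sw i) p = code v (sw i p) + if p = i.castSucc then 1 else 0 := by
  unfold code
  by_cases hp : p = i.castSucc
  · subst hp
    have hh : (Finset.univ.filter fun j : Fin (n + 1) =>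
        i.castSucc < j ∧ (v * sw i) j < (v * sw i) i.castSucc) =
        insert i.succ (Finset.univ.filter fun j : Fin (n + 1) => sw i i.castSucc < j ∧
          v j < v (sw i i.castSucc)) := by
      ext j
      simp only [Finset.mem_filter, Finset.mem_univ, true_and, Finset.mem_insert,
        Equiv.Perm.mul_apply, sw_castSucc]
      by_cases hj : j = i.succ
      · subst hj; simp [sw_succ, h, Fin.castSucc_lt_succ]
      · by_cases hj2 : j = i.castSucc
        · subst hj2; simp [cs_ne_succ]
          exact fun hh => absurd hh (not_lt.mpr Fin.castSucc_lt_succ.le)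
        · rw [sw_of_ne i hj2 hj]
          simp only [hj, false_or]
          have : (j : ℕ) ≠ i.succ := fun e => hj (Fin.ext e)
          rw [Fin.lt_def, Fin.lt_def (a := i.succ)]
          simp only [Fin.val_succ, Fin.val_castSucc] at *
          constructor
          · rintro ⟨a, b⟩; exact ⟨by omega, b⟩
          · rintro ⟨a, b⟩; exact ⟨by omega, b⟩
    rw [hh, Finset.card_insert_of_notMem (by simp [sw_castSucc]), if_pos rfl]
  · rw [if_neg hp, add_zero]
    refine Finset.card_bij (fun j _ => sw i j) ?_ ?_ ?_
    · intro j hj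
      have hj := (Finset.mem_filter.mp hj).2
      refine Finset.mem_filter.mpr ⟨Finset.mem_univ _, ?_⟩
      exact ⟨sw_lt i hj.1 (fun hh => hp hh.1), hj.2⟩
    · intro a _ b _ hab; exact (sw i).injective hab
    · intro j hj
      have hj := (Finset.mem_filter.mp hj).2
      refine ⟨sw i j, Finset.mem_filter.mpr ⟨Finset.mem_univ _, ?_⟩, sw_sw i j⟩
      have := sw_lt i hj.1 (fun hh => by
        rw [hh.1, hh.2] at hj; exact absurd hj.2 (not_lt.mpr h.le))
      rw [sw_sw] at this
      refine ⟨this, ?_⟩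
      rw [Equiv.Perm.mul_apply, Equiv.Perm.mul_apply, sw_sw]
      exact hj.2

theorem code_w0 {n : ℕ} (p : Fin (n + 1)) : code (w0 (n + 1)) p = n - p := by
  unfold code
  have : (Finset.univ.filter fun j : Fin (n + 1) => p < j ∧ w0 (n + 1) j < w0 (n + 1) p)
      = Finset.Ioi p := by
    ext j; simp [w0_apply, Fin.rev_lt_rev]
  rw [this, Fin.card_Ioi]; omega

theorem Sch_w0 {n : ℕ} : Sch (w0 (n + 1)) = staircase (n + 1) := by
  unfold Sch
  rw [inv_mul_cancel, op_one]

theorem Sch_dominant {n : ℕ} : ∀ (d : ℕ) (v : Equiv.Perm (Fin (n + 1))),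
    len (w0 (n + 1)) ≤ len v + d → (∀ i : Fin n, code v i.succ ≤ code v i.castSucc) →
    Sch v = ∏ p, X p ^ code v p := by
  intro d
  induction d with
  | zero =>
    intro v hd _
    have : v = w0 (n + 1) := by
      by_contra hv; have := len_lt_w0 v hv; omega
    rw [this, Sch_w0]
    unfold staircase
    refine Finset.prod_congr rfl fun p _ => ?_
    rw [code_w0]; rfl
  | succ d ih =>
    intro v hd hv
    by_cases hw : v = w0 (n + 1)
    · rw [hw, Sch_w0]
      unfold staircase
      refine Finset.prod_congr rfl fun p _ => ?_
      rw [code_w0]; rfl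
    have hex : ∃ m : ℕ, ∃ i : Fin n, (i : ℕ) = m ∧ v i.castSucc < v i.succ := by
      by_contra hc; push Not at hc
      exact hw (eq_w0_of_no_asc v fun i => not_lt.mpr (hc _ i rfl))
    obtain ⟨i, him, hi⟩ := Nat.find_spec hex
    have hmin := fun m' => Nat.find_min hex (m := m')
    rw [← him] at hmin
    have hdesc : ∀ j : Fin n, (j : ℕ) < i → v j.succ < v j.castSucc := by
      intro j hj
      rcases asc_or_desc v j with h | h
      · exact absurd ⟨j, rfl, h⟩ (hmin _ hj)
      · exact h
    have hceq : code v i.castSucc = code v i.succ := le_antisymm (code_asc v i hi) (hv i)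
    have hlen := len_sw_up v i hi
    have hcode : ∀ p, code (v * sw i) p = code v p + if p = i.castSucc then 1 else 0 := by
      intro p
      rw [code_sw v i hi]
      by_cases h1 : p = i.castSucc
      · subst h1; rw [sw_castSucc, hceq]
      · by_cases h2 : p = i.succ
        · subst h2; rw [sw_succ, hceq]
        · rw [sw_of_ne i h1 h2]
    have hS := ih (v * sw i) (by omega) (by
      intro j
      rw [hcode, hcode]
      by_cases h1 : j.succ = i.castSucc
      · have hlt := code_desc v j (hdesc j (by
          have := congrArg Fin.val h1; simp at this; omega))
        rw [if_pos h1]; omega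
      · rw [if_neg h1]; have := hv j; omega)
    have e : Sch v = D i (Sch (v * sw i)) := by
      rw [D_Sch_desc, mul_sw_sw]
      rw [Equiv.Perm.mul_apply, Equiv.Perm.mul_apply, sw_succ, sw_castSucc]; exact hi
    rw [e, hS]
    have e2 : (∏ p, X p ^ code (v * sw i) p : MvPolynomial (Fin (n + 1)) ℤ) =
        (∏ p, X p ^ code v p) * X i.castSucc := by
      simp only [hcode, pow_add, Finset.prod_mul_distrib]
      congr 1
      rw [Finset.prod_eq_single i.castSucc]
      · simp
      · intro b _ hb; simp [hb]
      · simp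
    have hinv : rename (⇑(sw i)) (∏ p, X p ^ code v p : MvPolynomial (Fin (n + 1)) ℤ) =
        ∏ p, X p ^ code v p := by
      rw [map_prod]
      refine Fintype.prod_equiv (sw i) _ _ fun p => ?_
      rw [map_pow, rename_X]
      congr 1
      by_cases h1 : p = i.castSucc
      · subst h1; rw [sw_castSucc, hceq]
      · by_cases h2 : p = i.succ
        · subst h2; rw [sw_succ, hceq]
        · rw [sw_of_ne i h1 h2]
    rw [e2, D_mul_of_inv i hinv]
    have : D i (X i.castSucc : MvPolynomial (Fin (n + 1)) ℤ) = 1 := by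
      apply D_unique; rw [rename_X, sw_castSucc]; unfold rt; ring
    rw [this, mul_one]

theorem Sch_dom {n : ℕ} (v : Equiv.Perm (Fin (n + 1)))
    (h : ∀ i : Fin n, code v i.succ ≤ code v i.castSucc) : Sch v = ∏ p, X p ^ code v p :=
  Sch_dominant (len (w0 (n + 1))) v (by omega) h

theorem code_one {n : ℕ} (p : Fin (n + 1)) : code 1 p = 0 := by
  unfold code
  rw [Finset.card_eq_zero, Finset.filter_eq_empty_iff]
  rintro j _ ⟨h1, h2⟩
  exact absurd h1 (not_lt.mpr (le_of_lt h2))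

theorem Sch_one {n : ℕ} : Sch (1 : Equiv.Perm (Fin (n + 1))) = 1 := by
  rw [Sch_dom 1 (by intro i; rw [code_one]; omega)]
  simp [code_one]

theorem op_inv {n : ℕ} {f : MvPolynomial (Fin (n + 1)) ℤ} (hf : ∀ i : Fin n, D i f = 0)
    (u : Equiv.Perm (Fin (n + 1))) (hu : u ≠ 1) : op u f = 0 := by
  have : ∃ i : Fin n, u i.succ < u i.castSucc := by
    by_contra hc; push Not at hc
    exact hu (eq_one_of_no_desc u fun i => not_lt.mpr (hc i))
  obtain ⟨i, hi⟩ := this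
  rw [op_desc u i hi, hf, map_zero]

theorem cf_monomial_degree {n : ℕ} (L : List (Fin (n + 1))) : ∀ u : Equiv.Perm (Fin (n + 1)),
    len u ≠ L.length → cf u ((L.map X).prod) = 0 := by
  induction L with
  | nil =>
    intro u hu
    unfold cf
    rw [List.map_nil, List.prod_nil, op_inv (fun i => D_of_inv i (map_one _)), map_zero]
    rintro rfl; exact hu len_one
  | cons b L ih =>
    intro u hu
    rw [List.map_cons, List.prod_cons, cf_X_mul]
    apply Finset.sum_eq_zero
    intro l _
    split_ifs with h
    · rw [ih _ (by simp at hu; omega), mul_zero]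
    · rfl

theorem exists_list_prod {n : ℕ} (e : Fin (n + 1) → ℕ) :
    ∃ L : List (Fin (n + 1)), (∏ p, X p ^ e p : MvPolynomial (Fin (n + 1)) ℤ) = (L.map X).prod ∧
      ∀ p, L.count p = e p := by
  refine ⟨(Finsupp.toMultiset (Finsupp.equivFunOnFinite.symm e)).toList, ?_, ?_⟩
  · rw [← Multiset.prod_coe, ← Multiset.map_coe, Multiset.coe_toList, Finsupp.toMultiset_map,
      Finsupp.prod_toMultiset, Finsupp.prod_mapDomain_index (by simp) (by simp [pow_add]),
      Finsupp.prod_fintype _ _ (by simp)]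
    simp
  · intro p
    rw [← Multiset.coe_count, Multiset.coe_toList, Finsupp.count_toMultiset]
    simp

theorem cf_staircase {n : ℕ} (u : Equiv.Perm (Fin (n + 1))) (hu : u ≠ w0 (n + 1)) :
    cf u (staircase (n + 1)) = 0 := by
  obtain ⟨L, hL, -⟩ := exists_list_prod (n := n) (fun p => n + 1 - 1 - (p : ℕ))
  have h0 : cf (w0 (n + 1)) (staircase (n + 1)) = 1 := by
    have := Sch_one (n := n)
    unfold Sch at this
    rw [inv_one, one_mul] at this
    unfold cf; rw [this, map_one]
  unfold staircase at *
  rw [hL] at h0 ⊢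
  have hl : len (w0 (n + 1)) = L.length := by
    by_contra hc
    rw [cf_monomial_degree L _ hc] at h0; exact absurd h0 (by norm_num)
  apply cf_monomial_degree
  have := len_lt_w0 u hu
  omega

theorem cf_Sch {n : ℕ} (u : Equiv.Perm (Fin (n + 1))) : ∀ w : Equiv.Perm (Fin (n + 1)),
    cf u (Sch w) = if u = w then 1 else 0 := by
  induction u using op_induction with
  | h1 =>
    intro w
    by_cases hw : w = 1
    · rw [hw, Sch_one, if_pos rfl]; unfold cf; rw [op_one, map_one]
    · rw [if_neg (Ne.symm hw)]
      unfold Sch cf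
      rw [op_one]
      apply cf_staircase
      intro h
      apply hw
      exact inv_eq_one.mp (mul_eq_right.mp h)
  | hs u i hi ih =>
    intro w
    unfold cf
    rw [op_desc u i hi]
    rcases asc_or_desc w i with h | h
    · rw [D_Sch_asc w i h, map_zero, map_zero, if_neg]
      rintro rfl; exact absurd h (not_lt.mpr hi.le)
    · rw [D_Sch_desc w i h]
      have := ih (w * sw i)
      unfold cf at this
      rw [this]
      simp

theorem cf_symIdeal {n : ℕ} {f : MvPolynomial (Fin (n + 1)) ℤ} (hf : f ∈ symIdeal (n + 1)) :
    ∀ u, cf u f = 0 := by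
  unfold symIdeal at hf
  induction hf using Submodule.span_induction with
  | mem f h =>
    intro u
    obtain ⟨h1, h2⟩ := h
    by_cases hu : u = 1
    · subst hu; unfold cf; rw [op_one, h2]
    · unfold cf; rw [op_inv (fun i => D_of_inv i (h1 (sw i))) u hu, map_zero]
  | zero => intro u; unfold cf; rw [map_zero, map_zero]
  | add f g _ _ h1 h2 => intro u; rw [cf_add, h1, h2, add_zero]
  | smul a f _ h => exact cf_mul_zero h a

theorem c_eq_cf {n : ℕ} (w v : Equiv.Perm (Fin (n + 1)))
    (c : Equiv.Perm (Fin (n + 1)) → ℤ)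
    (hc : SS (n + 1) w * SS (n + 1) v = ∑ u, c u • SS (n + 1) u) (u : Equiv.Perm (Fin (n + 1))) :
    c u = cf u (Sch w * Sch v) := by
  unfold SS at hc
  simp only [schubertPoly_eq] at hc
  rw [← map_mul] at hc
  simp only [← map_zsmul] at hc
  rw [← map_sum, Ideal.Quotient.eq] at hc
  have := cf_symIdeal hc u
  rw [cf_sub, cf_sum] at this
  simp only [cf_smul, cf_Sch] at this
  simp at this
  omega


set_option linter.unusedSimpArgs false

section hh
variable {n : ℕ}

/-- complete homogeneous polynomial on a set of variables -/
noncomputable def hS (S : Finset (Fin (n + 1))) (m : ℕ) : MvPolynomial (Fin (n + 1)) ℤ :=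
  ∑ s ∈ S.sym m, (Multiset.map X (s : Multiset (Fin (n + 1)))).prod

theorem hS_zero (S : Finset (Fin (n + 1))) : hS S 0 = 1 := by
  unfold hS
  rw [Finset.sym_zero, Finset.sum_singleton]
  rfl

theorem hS_insert (S : Finset (Fin (n + 1))) (q : Fin (n + 1)) (hq : q ∉ S) (m : ℕ) :
    hS (insert q S) (m + 1) = hS S (m + 1) + X q * hS (insert q S) m := by
  unfold hS
  have key : (insert q S).sym (m + 1) =
      S.sym (m + 1) ∪ ((insert q S).sym m).image (fun s => q ::ₛ s) := by
    ext s
    rw [Finset.mem_union, Finset.mem_image, Finset.mem_sym_iff, Finset.mem_sym_iff]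
    constructor
    · intro h
      by_cases hs : q ∈ s
      · right
        obtain ⟨s', rfl⟩ : ∃ s' : Sym (Fin (n + 1)) m, s = q ::ₛ s' :=
          ⟨s.erase q hs, (Sym.cons_erase hs).symm⟩
        refine ⟨s', ?_, rfl⟩
        rw [Finset.mem_sym_iff]
        intro a ha
        exact h a (Sym.mem_cons_of_mem ha)
      · left
        intro a ha
        have := h a ha
        rw [Finset.mem_insert] at this
        rcases this with rfl | h'
        · exact absurd ha hs
        · exact h'
    · rintro (h | ⟨s', hs', rfl⟩) a ha
      · exact Finset.mem_insert_of_mem (h a ha)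
      · rw [Sym.mem_cons] at ha
        rcases ha with rfl | ha
        · exact Finset.mem_insert_self _ _
        · exact (Finset.mem_sym_iff.mp hs') a ha
  rw [key, Finset.sum_union, Finset.sum_image, Finset.mul_sum]
  · congr 1
    refine Finset.sum_congr rfl fun s _ => ?_
    rw [Sym.coe_cons, Multiset.map_cons, Multiset.prod_cons]
  · intro a _ b _ hab
    exact Sym.cons_inj_right q a b |>.mp hab
  · rw [Finset.disjoint_left]
    intro s hs hs2
    rw [Finset.mem_image] at hs2
    obtain ⟨s', -, rfl⟩ := hs2
    exact hq ((Finset.mem_sym_iff.mp hs) q (Sym.mem_cons_self _ _))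

noncomputable def hZ (S : Finset (Fin (n + 1))) (d : ℤ) : MvPolynomial (Fin (n + 1)) ℤ :=
  if 0 ≤ d then hS S d.toNat else 0

theorem hZ_insert (S : Finset (Fin (n + 1))) (q : Fin (n + 1)) (hq : q ∉ S) (d : ℤ) :
    hZ S d = hZ (insert q S) d - X q * hZ (insert q S) (d - 1) := by
  unfold hZ
  by_cases h0 : 0 ≤ d
  · rw [if_pos h0, if_pos h0]
    by_cases h1 : 0 ≤ d - 1
    · rw [if_pos h1]
      obtain ⟨m, rfl⟩ : ∃ m : ℕ, d = m + 1 := ⟨(d - 1).toNat, by omega⟩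
      have e1 : ((m : ℤ) + 1).toNat = m + 1 := by omega
      have e2 : ((m : ℤ) + 1 - 1).toNat = m := by omega
      rw [e1, e2, hS_insert S q hq]; ring
    · rw [if_neg h1]
      have : d = 0 := by omega
      subst this
      simp [hS_zero]
  · rw [if_neg h0, if_neg h0, if_neg (by omega)]; ring

theorem hZ_exists (S T : Finset (Fin (n + 1))) (hd : Disjoint T S) :
    ∃ M : ℕ → MvPolynomial (Fin (n + 1)) ℤ, ∀ m : ℤ,
      hZ T m = ∑ j ∈ Finset.range (S.card + 1), hZ (S ∪ T) (m - j) * M j := by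
  induction S using Finset.induction_on with
  | empty => exact ⟨fun _ => 1, fun m => by simp⟩
  | insert q S hq ih =>
    have hd2 : Disjoint T S := Finset.disjoint_of_subset_right (Finset.subset_insert _ _) hd
    have hqT : q ∉ T := fun h => Finset.disjoint_left.mp hd h (Finset.mem_insert_self _ _)
    obtain ⟨M, hM⟩ := ih hd2
    refine ⟨fun j => (if j < S.card + 1 then M j else 0) - (if j = 0 then 0 else X q * M (j - 1)),
      fun m => ?_⟩
    rw [hM m, Finset.card_insert_of_notMem hq]
    have hq2 : q ∉ S ∪ T := by simp [hq, hqT]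
    have e : insert q S ∪ T = insert q (S ∪ T) := Finset.insert_union _ _ _
    rw [e]
    simp only [mul_sub, Finset.sum_sub_distrib]
    simp only [fun j : ℕ => hZ_insert (S ∪ T) q hq2 (m - j), sub_mul, Finset.sum_sub_distrib]
    congr 1
    · rw [Finset.sum_range_succ _ (S.card + 1)]
      simp only [lt_irrefl, if_false, mul_zero, add_zero]
      refine Finset.sum_congr rfl fun j hj => ?_
      rw [if_pos (Finset.mem_range.mp hj)]
    · rw [Finset.sum_range_succ' _ (S.card + 1)]
      simp only [if_true, mul_zero, add_zero]
      refine Finset.sum_congr rfl fun j hj => ?_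
      rw [if_neg (by omega), Nat.add_sub_cancel]
      have : m - ((j + 1 : ℕ) : ℤ) = m - j - 1 := by push_cast; ring
      rw [this]; ring

theorem hZ_singleton (p : Fin (n + 1)) (m : ℕ) : hZ {p} (m : ℤ) = X p ^ m := by
  unfold hZ
  rw [if_pos (by omega), Int.toNat_natCast]
  induction m with
  | zero => rw [hS_zero, pow_zero]
  | succ m ih =>
    have h := hS_insert (n := n) ∅ p (by simp) m
    have h0 : hS (∅ : Finset (Fin (n + 1))) (m + 1) = 0 := by
      unfold hS; rw [Finset.sym_empty]; simp
    rw [h0] at h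
    have e : insert p (∅ : Finset (Fin (n + 1))) = {p} := rfl
    rw [e] at h
    rw [h, ih, pow_succ]; ring

/-- alternant -/
noncomputable def alt (K : ℕ) (hK : K ≤ n + 1) (lam : ℕ → ℕ) : MvPolynomial (Fin (n + 1)) ℤ :=
  (Matrix.of fun p i : Fin K =>
    (X (Fin.castLE hK p) : MvPolynomial (Fin (n + 1)) ℤ) ^ (lam ((i : ℕ) + 1) + (K - 1 - i))).det

theorem hPolyZ_eq (K : ℕ) (d : ℤ) : hPolyZ (n + 1) K d =
    hZ (Finset.univ.filter fun i : Fin (n + 1) => (i : ℕ) < K) d := rfl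

theorem card_filter_lt {K : ℕ} (hK : K ≤ n + 1) :
    (Finset.univ.filter fun i : Fin (n + 1) => (i : ℕ) < K).card = K := by
  rw [Fin.card_filter_val_lt]; omega

theorem alt_factor (K : ℕ) (hK : K ≤ n + 1) : ∃ m : MvPolynomial (Fin (n + 1)) ℤ,
    ∀ lam, alt K hK lam = schurPoly (n + 1) K lam * m := by
  have hex : ∀ p : Fin K, ∃ M : ℕ → MvPolynomial (Fin (n + 1)) ℤ, ∀ m : ℤ,
      hZ {Fin.castLE hK p} m = ∑ j ∈ Finset.range K, hPolyZ (n + 1) K (m - j) * M j := by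
    intro p
    set A := (Finset.univ.filter fun i : Fin (n + 1) => (i : ℕ) < K) with hA
    have hpA : Fin.castLE hK p ∈ A := by simp [hA]
    obtain ⟨M, hM⟩ := hZ_exists (A.erase (Fin.castLE hK p)) {Fin.castLE hK p} (by simp)
    refine ⟨M, fun m => ?_⟩
    rw [hM m, Finset.card_erase_of_mem hpA, card_filter_lt hK]
    have e : K - 1 + 1 = K := by have := p.2; omega
    have e2 : A.erase (Fin.castLE hK p) ∪ {Fin.castLE hK p} = A := by
      rw [Finset.union_comm, ← Finset.insert_eq, Finset.insert_erase hpA]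
    rw [e, e2]; rfl
  choose M hM using hex
  refine ⟨(Matrix.of fun j p : Fin K => M p (K - 1 - j)).det, fun lam => ?_⟩
  unfold alt schurPoly
  rw [← Matrix.det_mul, ← Matrix.det_transpose]
  congr 1
  refine Matrix.ext fun i p => ?_
  rw [Matrix.transpose_apply, Matrix.of_apply, Matrix.mul_apply, ← hZ_singleton, hM p,
    ← Finset.sum_range_reflect, Finset.sum_range]
  refine Finset.sum_congr rfl fun j _ => ?_
  rw [Matrix.of_apply, Matrix.of_apply]
  congr 2
  have := i.2; have := j.2
  omega

theorem schurPoly_zero (K : ℕ) : schurPoly (n + 1) K (fun _ => 0) = 1 := by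
  unfold schurPoly
  rw [Matrix.det_of_isUpperTriangular]
  · apply Finset.prod_eq_one
    intro i _
    rw [Matrix.of_apply, hPolyZ_eq]
    unfold hZ
    rw [if_pos (by simp)]
    have : (((0 : ℕ) : ℤ) + ((i : ℕ) : ℤ) - (i : ℕ)).toNat = 0 := by omega
    rw [this, hS_zero]
  · intro i j hij
    have hij : j < i := hij
    rw [Matrix.of_apply, hPolyZ_eq]
    unfold hZ
    rw [if_neg]
    have h3 : (j : ℕ) < i := hij
    simp only [id, Nat.cast_zero, zero_add]
    omega

theorem bialternant (K : ℕ) (hK : K ≤ n + 1) (lam : ℕ → ℕ) :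
    schurPoly (n + 1) K lam * alt K hK (fun _ => 0) = alt K hK lam := by
  obtain ⟨m, hm⟩ := alt_factor K hK
  rw [hm, hm, schurPoly_zero, one_mul]

theorem rename_hS (σ : Equiv.Perm (Fin (n + 1))) (S : Finset (Fin (n + 1)))
    (hσ : ∀ p, σ p ∈ S ↔ p ∈ S) (m : ℕ) : rename (⇑σ) (hS S m) = hS S m := by
  unfold hS
  rw [map_sum]
  refine Finset.sum_bij (fun s _ => Sym.map σ s) ?_ ?_ ?_ ?_
  · intro s hs
    rw [Finset.mem_sym_iff] at hs ⊢
    intro a ha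
    rw [Sym.mem_map] at ha
    obtain ⟨b, hb, rfl⟩ := ha
    exact (hσ b).mpr (hs b hb)
  · intro a _ b _ hab
    exact Sym.map_injective σ.injective _ hab
  · intro s hs
    refine ⟨Sym.map σ.symm s, ?_, ?_⟩
    · rw [Finset.mem_sym_iff] at hs ⊢
      intro a ha
      rw [Sym.mem_map] at ha
      obtain ⟨b, hb, rfl⟩ := ha
      rw [← hσ, Equiv.apply_symm_apply]; exact hs b hb
    · rw [Sym.map_map]; simp
  · intro s _
    rw [map_multiset_prod, Multiset.map_map, Sym.coe_map, Multiset.map_map]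
    simp

theorem rename_schurPoly (σ : Equiv.Perm (Fin (n + 1))) (K : ℕ)
    (hσ : ∀ p, (σ p : ℕ) < K ↔ (p : ℕ) < K) (lam : ℕ → ℕ) :
    rename (⇑σ) (schurPoly (n + 1) K lam) = schurPoly (n + 1) K lam := by
  unfold schurPoly
  rw [AlgHom.map_det]
  congr 1
  refine Matrix.ext fun i j => ?_
  simp only [AlgHom.mapMatrix_apply, Matrix.map_apply, Matrix.of_apply]
  rw [hPolyZ_eq]
  unfold hZ
  split_ifs
  · exact rename_hS σ _ (fun p => by simp [hσ]) _
  · exact map_zero _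

theorem hS_supported (S : Finset (Fin (n + 1))) (m : ℕ) :
    hS S m ∈ supported ℤ (S : Set (Fin (n + 1))) := by
  unfold hS
  refine Subalgebra.sum_mem _ fun s hs => ?_
  refine Subalgebra.multiset_prod_mem _ (fun x hx => ?_)
  rw [Multiset.mem_map] at hx
  obtain ⟨a, ha, rfl⟩ := hx
  rw [X_mem_supported]
  exact (Finset.mem_sym_iff.mp hs) a ha

theorem schurPoly_supported (K : ℕ) (lam : ℕ → ℕ) :
    schurPoly (n + 1) K lam ∈ supported ℤ {p : Fin (n + 1) | (p : ℕ) < K} := by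
  unfold schurPoly
  rw [Matrix.det_apply]
  refine Subalgebra.sum_mem _ fun σ _ => ?_
  refine Subalgebra.zsmul_mem _ ?_ _
  refine Subalgebra.prod_mem _ fun i _ => ?_
  rw [Matrix.of_apply, hPolyZ_eq]
  unfold hZ
  split_ifs
  · have := hS_supported (Finset.univ.filter fun i : Fin (n + 1) => (i : ℕ) < K)
      ((lam ((σ i : ℕ) + 1) : ℤ) + (i : ℕ) - (σ i : ℕ)).toNat
    simpa using this
  · exact Subalgebra.zero_mem _

theorem schurPoly_support (K : ℕ) (lam : ℕ → ℕ) (s : Fin (n + 1) →₀ ℕ)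
    (hs : s ∈ (schurPoly (n + 1) K lam).support) (p : Fin (n + 1)) (hp : K ≤ (p : ℕ)) :
    s p = 0 := by
  have h := schurPoly_supported (n := n) K lam
  rw [mem_supported] at h
  by_contra hc
  have : p ∈ (schurPoly (n + 1) K lam).vars := by
    rw [mem_vars_iff_mem_support]; exact ⟨s, hs, Finsupp.mem_support_iff.mpr hc⟩
  have := h this
  simp at this
  omega

end hh


set_option linter.unusedSimpArgs false

section grass
variable {n : ℕ}

def revK (K : ℕ) (hK : K ≤ n + 1) (p : Fin (n + 1)) : Fin (n + 1) :=
  if (p : ℕ) < K then ⟨K - 1 - p, by omega⟩ else p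

theorem revK_val (K : ℕ) (hK : K ≤ n + 1) (p : Fin (n + 1)) :
    (revK K hK p : ℕ) = if (p : ℕ) < K then K - 1 - p else p := by
  unfold revK; split_ifs <;> rfl

theorem revK_invol (K : ℕ) (hK : K ≤ n + 1) : Function.Involutive (revK K hK) := by
  intro p
  ext
  rw [revK_val, revK_val]
  split_ifs <;> omega

def w0K (K : ℕ) (hK : K ≤ n + 1) : Equiv.Perm (Fin (n + 1)) := (revK_invol K hK).toPerm

theorem w0K_val (K : ℕ) (hK : K ≤ n + 1) (p : Fin (n + 1)) :
    (w0K K hK p : ℕ) = if (p : ℕ) < K then K - 1 - p else p := revK_val K hK p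

theorem w0K_inv (K : ℕ) (hK : K ≤ n + 1) : (w0K K hK)⁻¹ = w0K K hK := rfl

theorem w0K_mul_self (K : ℕ) (hK : K ≤ n + 1) : w0K K hK * w0K K hK = 1 := by
  nth_rewrite 1 [← w0K_inv]; exact inv_mul_cancel _

theorem fix_lt {K : ℕ} {u : Equiv.Perm (Fin (n + 1))}
    (hu : ∀ p : Fin (n + 1), K ≤ (p : ℕ) → u p = p) {p : Fin (n + 1)} (hp : (p : ℕ) < K) :
    (u p : ℕ) < K := by
  by_contra h
  have h1 := hu (u p) (by omega)
  have := u.injective h1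
  rw [this] at h
  exact h hp

theorem op_Sch_fix {K : ℕ} (v : Equiv.Perm (Fin (n + 1)))
    (hv : ∀ p q : Fin (n + 1), p < q → (q : ℕ) < K → v q < v p) (u : Equiv.Perm (Fin (n + 1))) :
    (∀ p : Fin (n + 1), K ≤ (p : ℕ) → u p = p) → op u⁻¹ (Sch v) = Sch (v * u) := by
  induction u using op_induction with
  | h1 => intro _; rw [inv_one, op_one, mul_one]
  | hs u i hi ih =>
    intro hu
    have hiK := fix_desc hu hi
    have hu' := fix_mul_sw hu hiK
    have ih := ih hu'
    have e : u⁻¹ = sw i * (u * sw i)⁻¹ := by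
      rw [mul_inv_rev]
      have : (sw i)⁻¹ = sw i := Equiv.swap_inv _ _
      rw [this, ← mul_assoc, sw_mul_self, one_mul]
    have hl := len_sw_down u i hi
    rw [e, ← D_op_up, ih, D_Sch_desc, mul_assoc, mul_sw_sw]
    · rw [Equiv.Perm.mul_apply, Equiv.Perm.mul_apply]
      apply hv
      · rw [Equiv.Perm.mul_apply, sw_castSucc, sw_succ]; exact hi
      · exact fix_lt hu' (by simpa using hiK)
    · rw [← e, len_inv, len_inv, hl]

theorem op_w0K_sw {K : ℕ} (hK : K ≤ n + 1) (i : Fin n) (hi : (i : ℕ) + 1 < K)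
    (f : MvPolynomial (Fin (n + 1)) ℤ) :
    op (w0K K hK) (rename (⇑(sw i)) f) = - op (w0K K hK) f := by
  have h : f + rename (⇑(sw i)) f = D i ((f + rename (⇑(sw i)) f) * X i.castSucc) := by
    rw [D_mul_of_inv i (by rw [map_add, rename_sw_sw]; exact add_comm _ _)]
    have : D i (X i.castSucc : MvPolynomial (Fin (n + 1)) ℤ) = 1 := by
      apply D_unique; rw [rename_X, sw_castSucc]; unfold rt; ring
    rw [this, mul_one]
  have h2 := congrArg (op (w0K K hK)) h
  rw [op_mul_D_desc _ _ (by
    rw [Fin.lt_def, w0K_val, w0K_val]; simp only [Fin.val_succ, Fin.val_castSucc]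
    rw [if_pos hi, if_pos (by omega)]; omega), map_add] at h2
  exact eq_neg_of_add_eq_zero_right h2

theorem op_w0K_perm {K : ℕ} (hK : K ≤ n + 1) (u : Equiv.Perm (Fin (n + 1))) :
    (∀ p : Fin (n + 1), K ≤ (p : ℕ) → u p = p) → ∀ f : MvPolynomial (Fin (n + 1)) ℤ,
    op (w0K K hK) (rename (⇑u) f) = ((Equiv.Perm.sign u : ℤˣ) : ℤ) • op (w0K K hK) f := by
  induction u using op_induction with
  | h1 => intro _ f; simp
  | hs u i hi ih =>
    intro hu f
    have hiK := fix_desc hu hi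
    have hu' := fix_mul_sw hu hiK
    have ih := ih hu' (rename (⇑(sw i)) f)
    rw [rename_mul', mul_sw_sw] at ih
    rw [ih, op_w0K_sw hK i hiK]
    have : Equiv.Perm.sign (sw i) = -1 := Equiv.Perm.sign_swap (cs_ne_succ i)
    rw [Equiv.Perm.sign_mul, this]
    simp

def embK (K : ℕ) (hK : K ≤ n + 1) : Fin K ≃ {p : Fin (n + 1) // (p : ℕ) < K} where
  toFun i := ⟨Fin.castLE hK i, i.2⟩
  invFun p := ⟨p.1, p.2⟩
  left_inv _ := rfl
  right_inv _ := rfl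

noncomputable def mono (K : ℕ) (hK : K ≤ n + 1) (lam : ℕ → ℕ) : MvPolynomial (Fin (n + 1)) ℤ :=
  ∏ i : Fin K, X (Fin.castLE hK i) ^ (lam ((i : ℕ) + 1) + (K - 1 - i))

theorem alt_eq (K : ℕ) (hK : K ≤ n + 1) (lam : ℕ → ℕ) :
    alt K hK lam = ∑ σ : Equiv.Perm (Fin K), ((Equiv.Perm.sign σ : ℤˣ) : ℤ) •
      rename (⇑(σ.extendDomain (embK K hK))) (mono K hK lam) := by
  unfold alt mono
  rw [Matrix.det_apply']
  refine Finset.sum_congr rfl fun σ _ => ?_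
  rw [map_prod, zsmul_eq_mul]
  congr 1
  refine Finset.prod_congr rfl fun i _ => ?_
  rw [Matrix.of_apply, map_pow, rename_X]
  congr 2
  have := Equiv.Perm.extendDomain_apply_image σ (embK K hK) i
  exact this.symm

theorem op_alt (K : ℕ) (hK : K ≤ n + 1) (lam : ℕ → ℕ) :
    op (w0K K hK) (alt K hK lam) = (K.factorial : ℤ) • op (w0K K hK) (mono K hK lam) := by
  rw [alt_eq, map_sum]
  have : ∀ σ : Equiv.Perm (Fin K), op (w0K K hK) (((Equiv.Perm.sign σ : ℤˣ) : ℤ) •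
      rename (⇑(σ.extendDomain (embK K hK))) (mono K hK lam)) =
        op (w0K K hK) (mono K hK lam) := by
    intro σ
    rw [map_smul, op_w0K_perm hK, smul_smul, Equiv.Perm.sign_extendDomain]
    · rw [← Units.val_mul, Int.units_mul_self]; simp
    · intro p hp
      exact Equiv.Perm.extendDomain_apply_not_subtype _ _ (by omega)
  rw [Finset.sum_congr rfl fun σ _ => this σ]
  simp [Fintype.card_perm]

theorem Sch_grass_op (K : ℕ) (hK : K ≤ n + 1) (κ : ℕ → ℕ) (g : Equiv.Perm (Fin (n + 1)))
    (h1 : ∀ p : Fin (n + 1), (p : ℕ) < K → (g p : ℕ) = p + κ (K - p))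
    (h2 : ∀ p q : Fin (n + 1), p < q → (q : ℕ) < K → g p < g q)
    (h3 : ∀ p q : Fin (n + 1), p < q → K ≤ (p : ℕ) → g p < g q) :
    op (w0K K hK) (mono K hK κ) = Sch g := by
  set v := g * w0K K hK with hv
  have hv1 : ∀ p q : Fin (n + 1), p < q → (q : ℕ) < K → v q < v p := by
    intro p q hpq hq
    rw [hv, Equiv.Perm.mul_apply, Equiv.Perm.mul_apply]
    rw [Fin.lt_def] at hpq
    apply h2
    · rw [Fin.lt_def, w0K_val, w0K_val, if_pos hq, if_pos (by omega)]; omega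
    · rw [w0K_val, if_pos (by omega)]; omega
  have hvge : ∀ p : Fin (n + 1), K ≤ (p : ℕ) → v p = g p := by
    intro p hp
    rw [hv, Equiv.Perm.mul_apply]; congr 1; ext; rw [w0K_val, if_neg (by omega)]
  have hc1 : ∀ p : Fin (n + 1), (p : ℕ) < K → code v p = v p := by
    intro p hp
    unfold code
    rw [← Fin.card_Iio (v p)]
    refine Finset.card_bij (fun j _ => v j) ?_ ?_ ?_
    · intro j hj
      exact Finset.mem_Iio.mpr (Finset.mem_filter.mp hj).2.2
    · intro a _ b _ hab; exact v.injective hab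
    · intro x hx
      have hx := Finset.mem_Iio.mp hx
      refine ⟨v.symm x, Finset.mem_filter.mpr ⟨Finset.mem_univ _, ?_, ?_⟩, ?_⟩
      · by_contra hc
        rcases lt_or_eq_of_le (not_lt.mp hc) with hlt | heq
        · have := hv1 _ _ hlt hp
          rw [Equiv.apply_symm_apply] at this
          exact absurd hx (not_lt.mpr this.le)
        · have := congrArg v heq
          rw [Equiv.apply_symm_apply] at this
          exact absurd hx (by rw [this]; exact lt_irrefl _)
      · rw [Equiv.apply_symm_apply]; exact hx
      · exact Equiv.apply_symm_apply _ _
  have hc2 : ∀ p : Fin (n + 1), K ≤ (p : ℕ) → code v p = 0 := by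
    intro p hp
    unfold code
    rw [Finset.card_eq_zero, Finset.filter_eq_empty_iff]
    rintro j _ ⟨hj1, hj2⟩
    have : K ≤ (j : ℕ) := by rw [Fin.lt_def] at hj1; omega
    rw [hvge p hp, hvge j this] at hj2
    exact absurd hj2 (not_lt.mpr (h3 p j hj1 hp).le)
  have hdom : Sch v = ∏ p, X p ^ code v p := by
    apply Sch_dom
    intro i
    by_cases h : K ≤ ((i.succ : Fin (n + 1)) : ℕ)
    · rw [hc2 _ h]; omega
    · have h' : ((i.succ : Fin (n + 1)) : ℕ) < K := by omega
      rw [hc1 _ h', hc1 _ (by simp at h' ⊢; omega)]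
      exact (hv1 _ _ Fin.castSucc_lt_succ h').le
  have hmono : mono K hK κ = Sch v := by
    rw [hdom]
    unfold mono
    have e : (∏ p : Fin (n + 1), X p ^ code v p : MvPolynomial (Fin (n + 1)) ℤ) =
        ∏ p ∈ Finset.univ.map (Fin.castLEEmb hK), X p ^ code v p := by
      symm
      apply Finset.prod_subset (Finset.subset_univ _)
      intro p _ hp
      rw [hc2, pow_zero]
      by_contra hc
      apply hp
      rw [Finset.mem_map]
      exact ⟨⟨p, by omega⟩, Finset.mem_univ _, rfl⟩
    rw [e, Finset.prod_map]
    refine Finset.prod_congr rfl fun i _ => ?_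
    have e2 : (Fin.castLEEmb hK) i = Fin.castLE hK i := rfl
    rw [e2]
    congr 1
    have hi := i.2
    rw [hc1 _ (by simp), hv, Equiv.Perm.mul_apply, h1 _ (by
      rw [w0K_val, if_pos (by simp)]; simp; omega), w0K_val, if_pos (by simp)]
    simp only [Fin.val_castLE]
    rw [add_comm]
    congr 2
    omega
  rw [hmono]
  have := op_Sch_fix v hv1 (w0K K hK) (by
    intro p hp; ext; rw [w0K_val, if_neg (by omega)])
  rw [w0K_inv] at this
  rw [this, hv, mul_assoc, w0K_mul_self, mul_one]

theorem Sch_grass (K : ℕ) (hK : K ≤ n + 1) (κ : ℕ → ℕ) (g : Equiv.Perm (Fin (n + 1)))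
    (h1 : ∀ p : Fin (n + 1), (p : ℕ) < K → (g p : ℕ) = p + κ (K - p))
    (h2 : ∀ p q : Fin (n + 1), p < q → (q : ℕ) < K → g p < g q)
    (h3 : ∀ p q : Fin (n + 1), p < q → K ≤ (p : ℕ) → g p < g q) :
    Sch g = schurPoly (n + 1) K κ := by
  have hA := op_alt K hK κ
  have hB := op_alt K hK (fun _ => 0)
  rw [Sch_grass_op K hK κ g h1 h2 h3, ← bialternant, op_mul_of_inv K] at hA
  · rw [hB, Sch_grass_op K hK (fun _ => 0) 1 (by simp) (fun _ _ h _ => h) (fun _ _ h _ => h),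
      Sch_one, zsmul_eq_mul, zsmul_eq_mul, mul_one, mul_comm] at hA
    have : (((K.factorial : ℤ)) : MvPolynomial (Fin (n + 1)) ℤ) ≠ 0 := by
      exact_mod_cast K.factorial_ne_zero
    exact (mul_left_cancel₀ this hA).symm
  · intro i hi
    apply rename_schurPoly
    intro p
    rw [sw_val]
    split_ifs <;> omega
  · intro p hp; ext; rw [w0K_val, if_neg (by omega)]

end grass


set_option linter.unusedSimpArgs false

section conj
variable {n : ℕ}

/-- `x_p ↦ - x_{rev p}` -/
noncomputable def phi : MvPolynomial (Fin (n + 1)) ℤ →ₐ[ℤ] MvPolynomial (Fin (n + 1)) ℤ :=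
  aeval fun p => - X (Fin.rev p)

theorem phi_X (p : Fin (n + 1)) : phi (X p : MvPolynomial (Fin (n + 1)) ℤ) = - X (Fin.rev p) := by
  unfold phi; rw [aeval_X]

theorem rev_cs (i : Fin n) : Fin.rev (Fin.rev i).castSucc = i.succ := by
  ext; simp [Fin.val_rev]; omega

theorem rev_sc (i : Fin n) : Fin.rev (Fin.rev i).succ = i.castSucc := by
  ext; simp [Fin.val_rev]; omega

theorem sw_rev (i : Fin n) (p : Fin (n + 1)) : Fin.rev (sw (Fin.rev i) p) = sw i (Fin.rev p) := by
  ext; rw [Fin.val_rev, sw_val, sw_val, Fin.val_rev, Fin.val_rev]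
  have := i.2; have := p.2
  split_ifs <;> omega

theorem phi_rename (i : Fin n) (f : MvPolynomial (Fin (n + 1)) ℤ) :
    phi (rename (⇑(sw (Fin.rev i))) f) = rename (⇑(sw i)) (phi f) := by
  induction f using MvPolynomial.induction_on with
  | C a => simp
  | add f g hf hg => simp only [map_add, hf, hg]
  | mul_X f p hf =>
    rw [map_mul, map_mul, hf, rename_X, phi_X, map_mul, phi_X, map_mul, map_neg, rename_X, sw_rev]

theorem D_phi (i : Fin n) (f : MvPolynomial (Fin (n + 1)) ℤ) :
    D i (phi f) = phi (D (Fin.rev i) f) := by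
  apply D_unique
  have h := congrArg phi (D_spec (Fin.rev i) f)
  rw [map_mul, map_sub, phi_rename] at h
  rw [← h]
  congr 1
  unfold rt
  rw [map_sub, phi_X, phi_X, rev_cs, rev_sc]; ring

theorem op_phi (u : Equiv.Perm (Fin (n + 1))) : ∀ f : MvPolynomial (Fin (n + 1)) ℤ,
    op u (phi f) = phi (op (w0 (n + 1) * u * w0 (n + 1)) f) := by
  induction u using op_induction with
  | h1 => intro f; rw [mul_one, w0_mul_self, op_one, op_one]
  | hs u i hi ih =>
    intro f
    have e : w0 (n + 1) * (u * sw i) * w0 (n + 1) =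
        w0 (n + 1) * u * w0 (n + 1) * sw (Fin.rev i) := by
      ext p
      simp only [Equiv.Perm.mul_apply, w0_apply, sw_rev]
    rw [op_desc u i hi, D_phi, ih, e, ← op_desc]
    simp only [Equiv.Perm.mul_apply, w0_apply, rev_cs, rev_sc]
    exact Fin.rev_lt_rev.mpr hi

theorem constantCoeff_phi (f : MvPolynomial (Fin (n + 1)) ℤ) :
    constantCoeff (phi f) = constantCoeff f := by
  induction f using MvPolynomial.induction_on with
  | C a => simp [phi]
  | add f g hf hg => simp only [map_add, hf, hg]
  | mul_X f p hf => rw [map_mul, map_mul, map_mul, phi_X]; simp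

theorem cf_phi (u : Equiv.Perm (Fin (n + 1))) (f : MvPolynomial (Fin (n + 1)) ℤ) :
    cf u (phi f) = cf (w0 (n + 1) * u * w0 (n + 1)) f := by
  unfold cf; rw [op_phi, constantCoeff_phi]

theorem cf_mul_phi (u w v : Equiv.Perm (Fin (n + 1))) :
    cf u (Sch w * Sch v) = cf u (Sch w * phi (Sch (w0 (n + 1) * v * w0 (n + 1)))) := by
  have h : ∀ u, cf u (Sch v - phi (Sch (w0 (n + 1) * v * w0 (n + 1)))) = 0 := by
    intro u
    rw [cf_sub, cf_phi, cf_Sch, cf_Sch]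
    have : (w0 (n + 1) * u * w0 (n + 1) = w0 (n + 1) * v * w0 (n + 1)) ↔ u = v := by simp
    simp [this]
  have := cf_mul_zero h (Sch w) u
  rw [mul_sub, cf_sub] at this
  omega

/-- values of a Grassmannian permutation after the descent -/
theorem grass_val (k : ℕ) (hk : k ≤ n + 1) (nu : ℕ → ℕ)
    (hnu : IsPartFun k nu) (v : Equiv.Perm (Fin (n + 1)))
    (hv : IsGrassOf (n + 1) k nu v) :
    (∀ p q : Fin (n + 1), p < q → (q : ℕ) < k → v p < v q) ∧
    (∀ p q : Fin (n + 1), p < q → k ≤ (p : ℕ) → v p < v q) ∧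
    (∀ q : Fin (n + 1), k ≤ (q : ℕ) → (v q : ℕ) + conjPart k nu (q - k + 1) = q) := by
  obtain ⟨hv1, hv2⟩ := hv
  have hpos : ∀ p : Fin (n + 1), pos (n + 1) ((p : ℕ) + 1) = p := by
    intro p; ext; simp only [pos, Nat.add_sub_cancel]; exact Nat.mod_eq_of_lt p.2
  have hval : ∀ p : Fin (n + 1), (p : ℕ) < k → (v p : ℕ) = p + nu (k - p) := by
    intro p hp
    have := hv1 (p + 1) (by omega) (by omega)
    unfold val at this
    rw [hpos] at this
    have e : k + 1 - ((p : ℕ) + 1) = k - p := by omega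
    rw [e] at this; omega
  have hanti : ∀ d i, 1 ≤ i → nu (i + d) ≤ nu i := by
    intro d
    induction d with
    | zero => intro i _; simp
    | succ d ih => intro i hi; exact (hnu.2.1 (i + d) (by omega)).trans (ih i hi)
  have A : ∀ p q : Fin (n + 1), p < q → (q : ℕ) < k → v p < v q := by
    intro p q hpq hq
    rw [Fin.lt_def] at hpq ⊢
    rw [hval p (by omega), hval q hq]
    have := hanti (q - p) (k - q) (by omega)
    have e : k - (q : ℕ) + (q - p) = k - p := by omega
    rw [e] at this; omega
  have B : ∀ p q : Fin (n + 1), p < q → k ≤ (p : ℕ) → v p < v q := by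
    have key : ∀ d : ℕ, ∀ p q : Fin (n + 1), (q : ℕ) = p + d + 1 → k ≤ (p : ℕ) → v p < v q := by
      intro d
      have step : ∀ p q : Fin (n + 1), (q : ℕ) = p + 1 → k ≤ (p : ℕ) → v p < v q := by
        intro p q hq hp
        have := hv2 (p + 1) (by omega) (by omega)
        unfold val at this
        rw [← hq, hpos] at this
        rw [hq, hpos] at this
        rw [Fin.lt_def]; omega
      induction d with
      | zero => intro p q hq hp; exact step p q hq hp
      | succ d ih =>
        intro p q hq hp
        exact (ih p ⟨p + d + 1, by omega⟩ rfl hp).trans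
          (step ⟨p + d + 1, by omega⟩ q (by simp only; omega) (by simp only; omega))
    intro p q hpq hp
    rw [Fin.lt_def] at hpq
    exact key (q - p - 1) p q (by omega) hp
  refine ⟨A, B, ?_⟩
  have hcount : ∀ q, (Finset.univ.filter fun j => v j < v q).card = (v q : ℕ) := by
    intro q
    rw [← Fin.card_Iio (v q)]
    refine Finset.card_bij (fun j _ => v j) ?_ ?_ ?_
    · intro j hj; exact Finset.mem_Iio.mpr (Finset.mem_filter.mp hj).2
    · intro a _ b _ hab; exact v.injective hab
    · intro x hx
      exact ⟨v.symm x, Finset.mem_filter.mpr ⟨Finset.mem_univ _, by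
        rw [Equiv.apply_symm_apply]; exact Finset.mem_Iio.mp hx⟩, Equiv.apply_symm_apply _ _⟩
  -- number of late positions with smaller value
  have hlate : ∀ r : Fin (n + 1), (r : ℕ) < k →
      (Finset.univ.filter fun j : Fin (n + 1) => k ≤ (j : ℕ) ∧ v j < v r).card = nu (k - r) := by
    intro r hr
    have h1 := hcount r
    have h2 : (Finset.univ.filter fun j => v j < v r) = Finset.Iio r ∪
        (Finset.univ.filter fun j : Fin (n + 1) => k ≤ (j : ℕ) ∧ v j < v r) := by
      ext j
      simp only [Finset.mem_filter, Finset.mem_univ, true_and, Finset.mem_union, Finset.mem_Iio]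
      constructor
      · intro h
        by_cases hj : k ≤ (j : ℕ)
        · exact Or.inr ⟨hj, h⟩
        · left
          by_contra hc
          rcases lt_or_eq_of_le (not_lt.mp hc) with hlt | heq
          · exact absurd h (not_lt.mpr (A r j hlt (by omega)).le)
          · rw [heq] at h; exact lt_irrefl _ h
      · rintro (h | h)
        · exact A j r h hr
        · exact h.2
    rw [h2, Finset.card_union_of_disjoint, Fin.card_Iio, hval r hr] at h1
    · omega
    · rw [Finset.disjoint_left]
      intro j hj hj2
      have h3 := Finset.mem_Iio.mp hj
      have h4 := (Finset.mem_filter.mp hj2).2.1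
      rw [Fin.lt_def] at h3; omega
  have hiff : ∀ r q : Fin (n + 1), (r : ℕ) < k → k ≤ (q : ℕ) →
      (v q < v r ↔ (q : ℕ) - k + 1 ≤ nu (k - r)) := by
    intro r q hr hq
    rw [← hlate r hr]
    have hcard : ((Finset.univ.filter fun j : Fin (n + 1) => k ≤ (j : ℕ) ∧ j ≤ q)).card =
        (q : ℕ) - k + 1 := by
      have : (Finset.univ.filter fun j : Fin (n + 1) => k ≤ (j : ℕ) ∧ j ≤ q) =
          Finset.Icc ⟨k, by omega⟩ q := by
        ext j; rw [Finset.mem_filter, Finset.mem_Icc, Fin.le_def (a := ⟨k, _⟩)]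
        exact and_iff_right (Finset.mem_univ _)
      rw [this, Fin.card_Icc]; simp only; omega
    have hcard2 : ((Finset.univ.filter fun j : Fin (n + 1) => k ≤ (j : ℕ) ∧ j < q)).card =
        (q : ℕ) - k := by
      have : (Finset.univ.filter fun j : Fin (n + 1) => k ≤ (j : ℕ) ∧ j < q) =
          Finset.Ico ⟨k, by omega⟩ q := by
        ext j; rw [Finset.mem_filter, Finset.mem_Ico, Fin.le_def]
        exact and_iff_right (Finset.mem_univ _)
      rw [this, Fin.card_Ico]
    constructor
    · intro h
      rw [← hcard]
      apply Finset.card_le_card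
      intro j hj
      obtain ⟨-, hj1, hj2⟩ := Finset.mem_filter.mp hj
      refine Finset.mem_filter.mpr ⟨Finset.mem_univ _, hj1, ?_⟩
      rcases lt_or_eq_of_le hj2 with hlt | heq
      · exact (B j q hlt hj1).trans h
      · rw [heq]; exact h
    · intro h
      by_contra hc
      have : (Finset.univ.filter fun j : Fin (n + 1) => k ≤ (j : ℕ) ∧ v j < v r).card ≤
          (Finset.univ.filter fun j : Fin (n + 1) => k ≤ (j : ℕ) ∧ j < q).card := by
        apply Finset.card_le_card
        intro j hj
        obtain ⟨-, hj1, hj2⟩ := Finset.mem_filter.mp hj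
        refine Finset.mem_filter.mpr ⟨Finset.mem_univ _, hj1, ?_⟩
        by_contra hjq
        rcases lt_or_eq_of_le (not_lt.mp hjq) with hlt | heq
        · exact hc ((B q j hlt hq).trans hj2)
        · rw [heq] at hc; exact hc hj2
      omega
  intro q hq
  have h1 := hcount q
  have hconj : conjPart k nu (q - k + 1) =
      (Finset.univ.filter fun r : Fin (n + 1) => (r : ℕ) < k ∧ v q < v r).card := by
    unfold conjPart
    rw [if_neg (by omega)]
    symm
    refine Finset.card_bij (fun r _ => k - (r : ℕ)) ?_ ?_ ?_
    · intro r hr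
      obtain ⟨-, hr1, hr2⟩ := Finset.mem_filter.mp hr
      rw [hiff r q hr1 hq] at hr2
      exact Finset.mem_filter.mpr ⟨Finset.mem_Icc.mpr ⟨by omega, by omega⟩, hr2⟩
    · intro r hr s hs h
      obtain ⟨-, hr1, -⟩ := Finset.mem_filter.mp hr
      obtain ⟨-, hs1, -⟩ := Finset.mem_filter.mp hs
      ext; omega
    · intro i hi
      obtain ⟨hi1, hi2⟩ := Finset.mem_filter.mp hi
      rw [Finset.mem_Icc] at hi1
      refine ⟨⟨k - i, by omega⟩, Finset.mem_filter.mpr ⟨Finset.mem_univ _, by simp only; omega, ?_⟩,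
        by simp only; omega⟩
      rw [hiff _ q (by simp only; omega) hq]
      have : k - (k - i) = i := by omega
      simpa only [this] using hi2
  have h2 : Finset.Iio q = (Finset.univ.filter fun j => v j < v q) ∪
      (Finset.univ.filter fun r : Fin (n + 1) => (r : ℕ) < k ∧ v q < v r) \
        (∅ : Finset (Fin (n + 1))) := by
    ext j
    simp only [Finset.mem_filter, Finset.mem_univ, true_and, Finset.mem_union, Finset.mem_Iio,
      Finset.sdiff_empty]
    constructor
    · intro h
      by_cases hj : k ≤ (j : ℕ)
      · exact Or.inl (B j q h hj)
      · rcases lt_trichotomy (v j) (v q) with h' | h' | h'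
        · exact Or.inl h'
        · exact absurd (v.injective h') h.ne
        · exact Or.inr ⟨by omega, h'⟩
    · rintro (h | h)
      · by_contra hc
        rcases lt_or_eq_of_le (not_lt.mp hc) with hlt | heq
        · exact absurd h (not_lt.mpr (B q j hlt hq).le)
        · rw [heq] at h; exact lt_irrefl _ h
      · rw [Fin.lt_def]; omega
  rw [Finset.sdiff_empty] at h2
  have h3 := congrArg Finset.card h2
  rw [Finset.card_union_of_disjoint, Fin.card_Iio, h1, ← hconj] at h3
  · omega
  · rw [Finset.disjoint_left]
    intro j hj hj2
    have a1 := (Finset.mem_filter.mp hj).2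
    have a2 := (Finset.mem_filter.mp hj2).2.2
    exact absurd a1 (not_lt.mpr a2.le)

theorem Sch_conj_grass (k : ℕ) (hk : k ≤ n + 1) (nu : ℕ → ℕ)
    (hnu : IsPartFun k nu) (v : Equiv.Perm (Fin (n + 1)))
    (hv : IsGrassOf (n + 1) k nu v) :
    Sch (w0 (n + 1) * v * w0 (n + 1)) = schurPoly (n + 1) (n + 1 - k) (conjPart k nu) := by
  obtain ⟨A, B, C⟩ := grass_val k hk nu hnu v hv
  apply Sch_grass (n + 1 - k) (by omega)
  · intro p hp
    have := C (Fin.rev p) (by rw [Fin.val_rev]; omega)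
    simp only [Equiv.Perm.mul_apply, w0_apply, Fin.val_rev] at this ⊢
    have e : n + 1 - (p + 1) - k + 1 = n + 1 - k - p := by omega
    rw [e] at this
    omega
  · intro p q hpq hq
    simp only [Equiv.Perm.mul_apply, w0_apply, Fin.rev_lt_rev]
    apply B _ _ (Fin.rev_lt_rev.mpr hpq)
    rw [Fin.val_rev]; omega
  · intro p q hpq hp
    simp only [Equiv.Perm.mul_apply, w0_apply, Fin.rev_lt_rev]
    apply A _ _ (Fin.rev_lt_rev.mpr hpq)
    rw [Fin.val_rev]; omega

end conj


set_option linter.unusedSimpArgs false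

section chains
variable {n : ℕ}

/-- product of transpositions; the head of the list is the last factor -/
def PT : List (Fin (n + 1) × Fin (n + 1)) → Equiv.Perm (Fin (n + 1))
  | [] => 1
  | x :: T => PT T * Equiv.swap x.2 x.1

noncomputable def nprod (L : List (Fin (n + 1))) : MvPolynomial (Fin (n + 1)) ℤ :=
  (L.map fun b => - X b).prod

theorem nprod_cons (b : Fin (n + 1)) (L : List (Fin (n + 1))) :
    nprod (b :: L) = - X b * nprod L := by
  unfold nprod; rw [List.map_cons, List.prod_cons]

theorem cf_nX_mul (u : Equiv.Perm (Fin (n + 1))) (b : Fin (n + 1))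
    (f : MvPolynomial (Fin (n + 1)) ℤ) :
    cf u (- X b * f) = ∑ l, if len (u * Equiv.swap b l) + 1 = len u then
      (- sg b l) * cf (u * Equiv.swap b l) f else 0 := by
  rw [neg_mul, cf_neg, cf_X_mul, ← Finset.sum_neg_distrib]
  refine Finset.sum_congr rfl fun l _ => ?_
  split_ifs <;> ring

theorem cf_Z (w : Equiv.Perm (Fin (n + 1))) (L : List (Fin (n + 1))) :
    ∀ u, cf u (nprod L * Sch w) ≠ 0 →
      ∃ T : List (Fin (n + 1) × Fin (n + 1)), T.map Prod.snd = L ∧ u = w * PT T ∧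
        len u = len w + L.length := by
  induction L with
  | nil =>
    intro u hu
    have e : nprod ([] : List (Fin (n + 1))) = 1 := rfl
    rw [e, one_mul, cf_Sch] at hu
    have : u = w := by by_contra hc; rw [if_neg hc] at hu; exact hu rfl
    exact ⟨[], rfl, by rw [this]; exact (mul_one _).symm, by rw [this]; rfl⟩
  | cons b L ih =>
    intro u hu
    rw [nprod_cons, mul_assoc, cf_nX_mul] at hu
    obtain ⟨l, -, hl⟩ := Finset.exists_ne_zero_of_sum_ne_zero hu
    split_ifs at hl with h
    · obtain ⟨T, hT1, hT2, hT3⟩ := ih _ (right_ne_zero_of_mul hl)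
      refine ⟨(l, b) :: T, by rw [List.map_cons, hT1], ?_, ?_⟩
      · change u = w * (PT T * Equiv.swap b l)
        rw [← mul_assoc, ← hT2, mul_assoc, Equiv.swap_mul_self, mul_one]
      · rw [List.length_cons]; omega
    · exact absurd rfl hl

def OkC (w : Equiv.Perm (Fin (n + 1))) : List (Fin (n + 1) × Fin (n + 1)) → Prop
  | [] => True
  | x :: T => x.1 < x.2 ∧ len (w * PT (x :: T)) = len (w * PT T) + 1 ∧ OkC w T

theorem cf_U (w : Equiv.Perm (Fin (n + 1))) (T : List (Fin (n + 1) × Fin (n + 1))) :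
    OkC w T → (∀ T' : List (Fin (n + 1) × Fin (n + 1)), T'.map Prod.snd = T.map Prod.snd →
      PT T' = PT T → T' = T) → cf (w * PT T) (nprod (T.map Prod.snd) * Sch w) = 1 := by
  induction T with
  | nil =>
    intro _ _
    have e : nprod (([] : List (Fin (n + 1) × Fin (n + 1))).map Prod.snd) = 1 := rfl
    rw [e, one_mul, cf_Sch, if_pos (show w * PT [] = w from mul_one w)]
  | cons x T ih =>
    obtain ⟨a, b⟩ := x
    rintro ⟨h1, h2, h3⟩ hU
    simp only at h1
    have ih := ih h3 (fun T' hT' hP => by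
      have := hU ((a, b) :: T') (by simp [hT']) (by simp [PT, hP])
      exact (List.cons.inj this).2)
    have e : w * PT ((a, b) :: T) * Equiv.swap b a = w * PT T := by
      change w * (PT T * Equiv.swap b a) * Equiv.swap b a = _
      rw [mul_assoc, mul_assoc, Equiv.swap_mul_self, mul_one]
    rw [List.map_cons, nprod_cons, mul_assoc, cf_nX_mul, Finset.sum_eq_single a]
    · rw [e, if_pos (by omega), ih]
      unfold sg
      rw [if_neg (not_lt.mpr h1.le)]; norm_num
    · intro l _ hl
      split_ifs with h
      · by_contra hc
        obtain ⟨T', hT1, hT2, -⟩ := cf_Z w _ _ (right_ne_zero_of_mul hc)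
        apply hl
        have := hU ((l, b) :: T') (by simp [hT1]) (by
          change PT T' * Equiv.swap b l = _
          apply mul_left_cancel (a := w)
          rw [← mul_assoc, ← hT2, mul_assoc, Equiv.swap_mul_self, mul_one])
        exact (Prod.mk.inj (List.cons.inj this).1).1
      · rfl
    · intro h; exact absurd (Finset.mem_univ _) h

/-- admissible lists -/
def Adm (k : ℕ) (T : List (Fin (n + 1) × Fin (n + 1))) : Prop :=
  (T.map Prod.fst).Nodup ∧ ∀ x ∈ T, (x.1 : ℕ) < k ∧ k ≤ (x.2 : ℕ)

theorem Adm.tail {k : ℕ} {x : Fin (n + 1) × Fin (n + 1)} {T : List (Fin (n + 1) × Fin (n + 1))}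
    (h : Adm k (x :: T)) : Adm k T :=
  ⟨(List.nodup_cons.mp h.1).2, fun y hy => h.2 y (List.mem_cons_of_mem _ hy)⟩

theorem PT_fix (T : List (Fin (n + 1) × Fin (n + 1))) (x : Fin (n + 1))
    (h1 : x ∉ T.map Prod.fst) (h2 : x ∉ T.map Prod.snd) : PT T x = x := by
  induction T with
  | nil => rfl
  | cons y T ih =>
    simp only [List.map_cons, List.mem_cons, not_or] at h1 h2
    change PT T (Equiv.swap y.2 y.1 x) = x
    rw [Equiv.swap_apply_of_ne_of_ne h2.1 h1.1, ih h1.2 h2.2]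

theorem PT_fix_lt {k : ℕ} {T : List (Fin (n + 1) × Fin (n + 1))}
    (hT : ∀ x ∈ T, k ≤ (x.2 : ℕ)) {x : Fin (n + 1)} (hx : (x : ℕ) < k)
    (h1 : x ∉ T.map Prod.fst) : PT T x = x := by
  apply PT_fix T x h1
  intro h
  rw [List.mem_map] at h
  obtain ⟨y, hy, rfl⟩ := h
  have := hT y hy; omega

theorem PT_head {k : ℕ} {a b : Fin (n + 1)} {T : List (Fin (n + 1) × Fin (n + 1))}
    (h : Adm k ((a, b) :: T)) : PT T a = a ∧ PT ((a, b) :: T) b = a ∧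
      PT ((a, b) :: T) a = PT T b ∧
      ∀ x, x ≠ a → x ≠ b → PT ((a, b) :: T) x = PT T x := by
  have h0 : PT T a = a := PT_fix_lt (fun x hx => (h.tail.2 x hx).2)
    (h.2 _ List.mem_cons_self).1 (List.nodup_cons.mp h.1).1
  refine ⟨h0, ?_, ?_, ?_⟩
  · change PT T (Equiv.swap b a b) = a
    rw [Equiv.swap_apply_left, h0]
  · change PT T (Equiv.swap b a a) = _
    rw [Equiv.swap_apply_right]
  · intro x hxa hxb
    change PT T (Equiv.swap b a x) = _
    rw [Equiv.swap_apply_of_ne_of_ne hxb hxa]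

theorem PT_moved {k : ℕ} {T : List (Fin (n + 1) × Fin (n + 1))} (h : Adm k T) :
    ∀ x ∈ T.map Prod.fst, PT T x ≠ x := by
  induction T with
  | nil => intro x hx; simp at hx
  | cons y T ih =>
    obtain ⟨a, b⟩ := y
    obtain ⟨h1, h2, h3, h4⟩ := PT_head h
    have hab := h.2 _ List.mem_cons_self
    simp only at hab
    intro x hx
    rw [List.map_cons, List.mem_cons] at hx
    rcases hx with rfl | hx
    · rw [h3]
      intro e
      have := (PT T).injective (e.trans h1.symm)
      rw [this] at hab
      omega
    · have hxk : (x : ℕ) < k := by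
        rw [List.mem_map] at hx
        obtain ⟨z, hz, rfl⟩ := hx
        exact (h.tail.2 z hz).1
      have hxa : x ≠ a := by
        rintro rfl; exact (List.nodup_cons.mp h.1).1 hx
      have hxb : x ≠ b := by rintro rfl; omega
      rw [h4 x hxa hxb]
      exact ih h.tail x hx

theorem PT_unique {k : ℕ} : ∀ (T T' : List (Fin (n + 1) × Fin (n + 1))), Adm k T → Adm k T' →
    T'.map Prod.snd = T.map Prod.snd → PT T' = PT T → T' = T := by
  intro T
  induction T with
  | nil => intro T' _ _ h _; simpa using h
  | cons y T ih =>
    obtain ⟨a, b⟩ := y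
    intro T' hA hA' hs hP
    cases T' with
    | nil => simp at hs
    | cons y' T' =>
      obtain ⟨a', b'⟩ := y'
      simp only [List.map_cons, List.cons.injEq] at hs
      obtain ⟨rfl, hs⟩ := hs
      have e1 := (PT_head hA).2.1
      have e2 := (PT_head hA').2.1
      rw [hP, e1] at e2
      subst e2
      rw [ih T' hA.tail hA'.tail hs]
      exact mul_right_cancel (b := Equiv.swap b' a) hP

/-- first hit of the upper positions -/
inductive Hit (k : ℕ) (z : Equiv.Perm (Fin (n + 1))) : Fin (n + 1) → Fin (n + 1) → Prop
  | base (x : Fin (n + 1)) (hx : (x : ℕ) < k) (hb : k ≤ (z x : ℕ)) : Hit k z x (z x)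
  | step (x b : Fin (n + 1)) (hx : (x : ℕ) < k) (hb : (z x : ℕ) < k) (h : Hit k z (z x) b) :
      Hit k z x b

theorem Hit.unique {k : ℕ} {z : Equiv.Perm (Fin (n + 1))} {x b : Fin (n + 1)} (h : Hit k z x b) :
    ∀ b', Hit k z x b' → b = b' := by
  induction h with
  | base x hx hb =>
    intro b' h'
    cases h' with
    | base => rfl
    | step _ _ _ h1 => omega
  | step x b hx hb _ ih =>
    intro b' h'
    cases h' with
    | base => omega
    | step _ _ _ h1 h2 => exact ih b' h2

theorem Hit.mono {k : ℕ} {a b : Fin (n + 1)} {T : List (Fin (n + 1) × Fin (n + 1))}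
    (hA : Adm k ((a, b) :: T)) {x c : Fin (n + 1)} (h : Hit k (PT T) x c) :
    Hit k (PT ((a, b) :: T)) x c := by
  obtain ⟨h1, h2, h3, h4⟩ := PT_head hA
  have hab := hA.2 _ List.mem_cons_self
  simp only at hab
  induction h with
  | base x hx hb =>
    have hxa : x ≠ a := by rintro rfl; rw [h1] at hb; omega
    have hxb : x ≠ b := by rintro rfl; omega
    rw [← h4 x hxa hxb]
    exact Hit.base x hx (by rw [h4 x hxa hxb]; exact hb)
  | step x c hx hb _ ih =>
    by_cases hxa : x = a
    · subst hxa; rw [h1] at ih; exact ih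
    · have hxb : x ≠ b := by rintro rfl; omega
      rw [← h4 x hxa hxb] at ih hb
      exact Hit.step x c hx hb ih

theorem PT_second {k : ℕ} {T : List (Fin (n + 1) × Fin (n + 1))} (hA : Adm k T) (b : Fin (n + 1))
    (hb : k ≤ (b : ℕ)) : PT T b = b ∨ (PT T b, b) ∈ T := by
  induction T with
  | nil => left; rfl
  | cons y T ih =>
    obtain ⟨a, c⟩ := y
    obtain ⟨h1, h2, h3, h4⟩ := PT_head hA
    have hab := hA.2 _ List.mem_cons_self
    simp only at hab
    by_cases hbc : b = c
    · subst hbc; right; rw [h2]; exact List.mem_cons_self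
    · have hba : b ≠ a := by rintro rfl; omega
      rw [h4 b hba hbc]
      rcases ih hA.tail with h | h
      · exact Or.inl h
      · exact Or.inr (List.mem_cons_of_mem _ h)

theorem Hit_of_mem {k : ℕ} {T : List (Fin (n + 1) × Fin (n + 1))} (hA : Adm k T) :
    ∀ x ∈ T, Hit k (PT T) x.1 x.2 := by
  induction T with
  | nil => intro x hx; simp at hx
  | cons y T ih =>
    obtain ⟨a, b⟩ := y
    intro x hx
    rw [List.mem_cons] at hx
    have ih := ih hA.tail
    rcases hx with rfl | hx
    · obtain ⟨h1, h2, h3, h4⟩ := PT_head hA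
      have hab := hA.2 _ List.mem_cons_self
      simp only at hab ⊢
      rcases PT_second hA.tail b hab.2 with h | h
      · rw [h] at h3
        have := Hit.base (z := PT ((a, b) :: T)) a hab.1 (by rw [h3]; exact hab.2)
        rwa [h3] at this
      · have hh := Hit.mono hA (ih _ h)
        simp only at hh
        refine Hit.step a b hab.1 ?_ ?_
        · rw [h3]; exact (hA.tail.2 _ h).1
        · rw [h3]; exact hh
    · exact Hit.mono hA (ih x hx)

theorem Adm_of_eq {k : ℕ} {T T' : List (Fin (n + 1) × Fin (n + 1))} (hA : Adm k T)
    (h2 : ∀ x ∈ T', k ≤ (x.2 : ℕ)) (hl : T'.length = T.length) (hP : PT T' = PT T) :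
    Adm k T' ∧ (T.map Prod.fst).Perm (T'.map Prod.fst) := by
  have hsub : T.map Prod.fst ⊆ T'.map Prod.fst := by
    intro x hx
    by_contra hc
    have hxk : (x : ℕ) < k := by
      rw [List.mem_map] at hx
      obtain ⟨z, hz, rfl⟩ := hx
      exact (hA.2 z hz).1
    have := PT_fix_lt h2 hxk hc
    rw [hP] at this
    exact PT_moved hA x hx this
  have hp : (T.map Prod.fst).Perm (T'.map Prod.fst) :=
    (List.subperm_of_subset hA.1 hsub).perm_of_length_le (by simp [hl])
  refine ⟨⟨hp.nodup_iff.mp hA.1, fun x hx => ⟨?_, h2 x hx⟩⟩, hp⟩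
  have : x.1 ∈ T.map Prod.fst := hp.mem_iff.mpr (List.mem_map_of_mem hx)
  rw [List.mem_map] at this
  obtain ⟨z, hz, e⟩ := this
  rw [← e]; exact (hA.2 z hz).1

theorem PT_perm {k : ℕ} {T T' : List (Fin (n + 1) × Fin (n + 1))} (hA : Adm k T)
    (h2 : ∀ x ∈ T', k ≤ (x.2 : ℕ)) (hl : T'.length = T.length) (hP : PT T' = PT T) :
    T.Perm T' := by
  obtain ⟨hA', hp⟩ := Adm_of_eq hA h2 hl hP
  refine (List.subperm_of_subset hA.1.of_map ?_).perm_of_length_le hl.le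
  rintro ⟨a, b⟩ hx
  have : a ∈ T'.map Prod.fst := hp.mem_iff.mp (List.mem_map_of_mem (f := Prod.fst) hx)
  rw [List.mem_map] at this
  obtain ⟨⟨a', b'⟩, hz, e⟩ := this
  simp only at e
  subst e
  have e1 := Hit_of_mem hA _ hx
  have e2 := Hit_of_mem hA' _ hz
  rw [hP] at e2
  simp only at e1 e2
  rw [e1.unique _ e2]; exact hz

/-- main extraction: coefficient of a product of negative variables -/
theorem cf_list {k : ℕ} (w : Equiv.Perm (Fin (n + 1))) (T : List (Fin (n + 1) × Fin (n + 1)))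
    (hA : Adm k T) (hOk : OkC w T) (hlen : len (w * PT T) = len w + T.length)
    (L : List (Fin (n + 1))) (hL : ∀ b ∈ L, k ≤ (b : ℕ)) :
    cf (w * PT T) (nprod L * Sch w) = if L.Perm (T.map Prod.snd) then 1 else 0 := by
  split_ifs with h
  · have e : nprod L = nprod (T.map Prod.snd) := by
      unfold nprod
      exact (h.map _).prod_eq
    rw [e]
    apply cf_U w T hOk
    intro T' hs hP
    have h2 : ∀ x ∈ T', k ≤ (x.2 : ℕ) := by
      intro x hx
      have : x.2 ∈ T.map Prod.snd := by rw [← hs]; exact List.mem_map_of_mem hx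
      rw [List.mem_map] at this
      obtain ⟨z, hz, e⟩ := this
      rw [← e]; exact (hA.2 z hz).2
    have hl : T'.length = T.length := by
      have := congrArg List.length hs; simpa using this
    exact PT_unique T T' hA (Adm_of_eq hA h2 hl hP).1 hs hP
  · by_contra hc
    obtain ⟨T', hs, hP, hl⟩ := cf_Z w L _ hc
    have hP : PT T' = PT T := (mul_left_cancel hP).symm
    apply h
    have h2 : ∀ x ∈ T', k ≤ (x.2 : ℕ) := by
      intro x hx
      exact hL _ (by rw [← hs]; exact List.mem_map_of_mem hx)
    have := PT_perm hA h2 (by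
      have := congrArg List.length hs; simp at this; omega) hP
    rw [← hs]
    exact (this.map _).symm

end chains


set_option linter.unusedSimpArgs false

section extraction
variable {n : ℕ}

theorem perm_eq_one_of_le {K : ℕ} (σ : Equiv.Perm (Fin K)) (h : ∀ i, σ i ≤ i) : σ = 1 := by
  have key : ∀ m : ℕ, ∀ i : Fin K, (i : ℕ) = m → σ i = i := by
    intro m
    induction m using Nat.strong_induction_on with
    | _ m ih =>
      intro i hi
      by_contra hne
      have hlt : σ i < i := lt_of_le_of_ne (h i) hne
      have := ih (σ i : ℕ) (by rw [← hi]; exact hlt) (σ i) rfl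
      exact hne (σ.injective this)
  ext i; rw [key _ i rfl]; rfl

/-- exponent vector of a permuted term of the alternant -/
noncomputable def ex {K : ℕ} (hK : K ≤ n + 1) (σ : Equiv.Perm (Fin K)) (lam : ℕ → ℕ) :
    Fin (n + 1) →₀ ℕ :=
  ∑ i : Fin K, Finsupp.single (Fin.castLE hK (σ i)) (lam ((i : ℕ) + 1) + (K - 1 - i))

theorem ex_apply {K : ℕ} (hK : K ≤ n + 1) (σ : Equiv.Perm (Fin K)) (lam : ℕ → ℕ) (i : Fin K) :
    ex hK σ lam (Fin.castLE hK (σ i)) = lam ((i : ℕ) + 1) + (K - 1 - i) := by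
  unfold ex
  rw [Finsupp.finsetSum_apply, Finset.sum_eq_single i]
  · rw [Finsupp.single_eq_same]
  · intro j _ hj
    rw [Finsupp.single_apply, if_neg]
    intro e
    exact hj (σ.injective (Fin.castLE_injective hK e))
  · intro h; exact absurd (Finset.mem_univ _) h

theorem ex_apply_ge {K : ℕ} (hK : K ≤ n + 1) (σ : Equiv.Perm (Fin K)) (lam : ℕ → ℕ)
    (p : Fin (n + 1)) (hp : K ≤ (p : ℕ)) : ex hK σ lam p = 0 := by
  unfold ex
  rw [Finsupp.finsetSum_apply]
  refine Finset.sum_eq_zero fun i _ => ?_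
  rw [Finsupp.single_apply, if_neg]
  intro e
  have := congrArg Fin.val e
  have h2 := (σ i).2
  simp at this
  omega

theorem alt_mon (K : ℕ) (hK : K ≤ n + 1) (lam : ℕ → ℕ) :
    alt K hK lam = ∑ σ : Equiv.Perm (Fin K), ((Equiv.Perm.sign σ : ℤˣ) : ℤ) •
      monomial (ex hK σ lam) (1 : ℤ) := by
  unfold alt ex
  rw [Matrix.det_apply']
  refine Finset.sum_congr rfl fun σ _ => ?_
  rw [zsmul_eq_mul]
  congr 1
  rw [monomial_sum_one]
  refine Finset.prod_congr rfl fun i _ => ?_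
  rw [Matrix.of_apply, X_pow_eq_monomial]

theorem ex_eq {K : ℕ} (hK : K ≤ n + 1) (σ : Equiv.Perm (Fin K)) (lam mu : ℕ → ℕ)
    (hl : ∀ j, 1 ≤ j → lam (j + 1) ≤ lam j) (hm : ∀ j, 1 ≤ j → mu (j + 1) ≤ mu j)
    (h : ex hK σ lam = ex hK 1 mu) : σ = 1 ∧ ∀ i, i < K → lam (i + 1) = mu (i + 1) := by
  have anti : ∀ f : ℕ → ℕ, (∀ j, 1 ≤ j → f (j + 1) ≤ f j) → ∀ i j, i ≤ j → f (j + 1) ≤ f (i + 1) := by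
    intro f hf i j hij
    exact antitone_nat_of_succ_le (f := fun j => f (j + 1)) (fun m => hf (m + 1) (by omega)) hij
  have e : ∀ i : Fin K, lam ((i : ℕ) + 1) + (K - 1 - i) =
      mu ((σ i : ℕ) + 1) + (K - 1 - σ i) := by
    intro i
    rw [← ex_apply hK σ lam i, h]
    exact ex_apply hK 1 mu (σ i)
  have hmono : StrictMono σ := by
    intro i j hij
    by_contra hc
    rw [not_lt] at hc
    have h1 := anti lam hl i j (le_of_lt hij)
    have h2 := anti mu hm (σ j) (σ i) hc
    have h3 := e i
    have h4 := e j
    have h5 : (i : ℕ) < j := hij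
    have h6 : (σ j : ℕ) ≤ σ i := hc
    have := (σ i).2
    have := j.2
    omega
  have h1 : σ⁻¹ = 1 := by
    apply perm_eq_one_of_le
    intro i
    have := hmono.le_apply (x := σ⁻¹ i)
    simpa using this
  have h2 : σ = 1 := inv_eq_one.mp h1
  subst h2
  refine ⟨rfl, fun i hi => ?_⟩
  have := e ⟨i, hi⟩
  simp at this
  exact this

theorem coeff_alt {K : ℕ} (hK : K ≤ n + 1) (lam mu : ℕ → ℕ)
    (hl : IsPartFun K lam) (hm : IsPartFun K mu) :
    coeff (ex hK 1 mu) (alt K hK lam) = if lam = mu then 1 else 0 := by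
  rw [alt_mon, coeff_sum]
  simp only [coeff_smul, coeff_monomial, smul_eq_mul]
  split_ifs with h
  · subst h
    rw [Finset.sum_eq_single 1]
    · simp
    · intro σ _ hσ
      rw [if_neg, mul_zero]
      intro e
      exact hσ (ex_eq hK σ lam lam hl.2.1 hl.2.1 e).1
    · intro h; exact absurd (Finset.mem_univ _) h
  · refine Finset.sum_eq_zero fun σ _ => ?_
    rw [if_neg, mul_zero]
    intro e
    apply h
    have := (ex_eq hK σ lam mu hl.2.1 hm.2.1 e).2
    funext j
    rcases Nat.eq_zero_or_pos j with rfl | hj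
    · rw [hl.1, hm.1]
    · by_cases hjK : j ≤ K
      · have := this (j - 1) (by omega)
        rwa [Nat.sub_add_cancel hj] at this
      · rw [hl.2.2 j (by omega), hm.2.2 j (by omega)]

theorem coeff_mul_alt {K : ℕ} (hK : K ≤ n + 1) (lam mu : ℕ → ℕ) (f : MvPolynomial (Fin (n + 1)) ℤ)
    (hm : ∀ j, 1 ≤ j → mu (j + 1) ≤ mu j)
    (hlm : ∀ j, 1 ≤ j → lam (j + 1) = mu j) (d : Fin (n + 1) →₀ ℕ)
    (hd : ∀ i : Fin K, lam ((i : ℕ) + 1) = mu (i + 1) + d (Fin.castLE hK i))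
    (hd0 : ∀ p : Fin (n + 1), K ≤ (p : ℕ) → d p = 0) :
    coeff (ex hK 1 lam) (f * alt K hK mu) = coeff d f := by
  have anti : ∀ i j, i ≤ j → mu (j + 1) ≤ mu (i + 1) := by
    intro i j hij
    exact antitone_nat_of_succ_le (f := fun j => mu (j + 1)) (fun m => hm (m + 1) (by omega)) hij
  have hex : ex hK 1 lam = d + ex hK 1 mu := by
    ext p
    by_cases hp : (p : ℕ) < K
    · have e : p = Fin.castLE hK ((1 : Equiv.Perm (Fin K)) ⟨p, hp⟩) := rfl
      rw [Finsupp.add_apply]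
      rw [e, ex_apply, ex_apply, hd ⟨p, hp⟩]
      simp only [Equiv.Perm.one_apply]
      omega
    · rw [Finsupp.add_apply, ex_apply_ge hK _ _ p (by omega), ex_apply_ge hK _ _ p (by omega),
        hd0 p (by omega)]
  rw [alt_mon, Finset.mul_sum, coeff_sum, Finset.sum_eq_single 1]
  · rw [hex]
    simp
  · intro σ _ hσ
    rw [mul_smul_comm, coeff_smul, coeff_mul_monomial', if_neg, smul_zero]
    intro hle'
    apply hσ
    apply perm_eq_one_of_le
    intro i
    by_contra hc
    rw [not_le] at hc
    have h1 := hle' (Fin.castLE hK (σ i))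
    have h2 := ex_apply hK 1 lam (σ i)
    rw [Equiv.Perm.one_apply] at h2
    rw [ex_apply, h2] at h1
    have h3 : (i : ℕ) < σ i := hc
    have h4 := hlm (σ i : ℕ) (by omega)
    have h5 := anti i ((σ i : ℕ) - 1) (by omega)
    rw [Nat.sub_add_cancel (by omega)] at h5
    have := (σ i).2
    omega
  · intro h; exact absurd (Finset.mem_univ _) h

theorem LR_extract {K : ℕ} (hK : K ≤ n + 1) (lam mu kap : ℕ → ℕ)
    (hl : IsPartFun K lam) (hm : IsPartFun K mu)
    (hlm : ∀ j, 1 ≤ j → lam (j + 1) = mu j) (d : Fin (n + 1) →₀ ℕ)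
    (hd : ∀ i : Fin K, lam ((i : ℕ) + 1) = mu (i + 1) + d (Fin.castLE hK i))
    (hd0 : ∀ p : Fin (n + 1), K ≤ (p : ℕ) → d p = 0)
    (cLR : (ℕ → ℕ) → ℤ) (hfin : (Function.support cLR).Finite)
    (hsupp : ∀ lam, cLR lam ≠ 0 → IsPartFun K lam)
    (hLR : schurPoly (n + 1) K mu * schurPoly (n + 1) K kap =
      ∑ᶠ lam, cLR lam • schurPoly (n + 1) K lam) :
    cLR lam = coeff d (schurPoly (n + 1) K kap) := by
  rw [← coeff_mul_alt hK lam mu _ hm.2.1 hlm d hd hd0, ← bialternant K hK mu, ← mul_assoc,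
    mul_comm (schurPoly (n + 1) K kap), hLR,
    finsum_eq_sum_of_support_subset (s := hfin.toFinset) _ (by
      intro x hx
      rw [Set.Finite.coe_toFinset]
      intro h
      apply hx
      change cLR x • _ = _
      rw [h, zero_smul]), Finset.sum_mul, coeff_sum]
  rw [Finset.sum_congr rfl (g := fun x => if x = lam then cLR lam else 0)]
  · rw [Finset.sum_ite_eq']
    split_ifs with h
    · rfl
    · rw [Set.Finite.mem_toFinset, Function.mem_support, not_not] at h
      exact h
  · intro x hx
    rw [Set.Finite.mem_toFinset] at hx
    rw [smul_mul_assoc, bialternant, coeff_smul, coeff_alt hK x lam (hsupp x hx) hl]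
    split_ifs with h
    · subst h; simp
    · simp

end extraction


set_option linter.unusedSimpArgs false

section final
variable {n : ℕ}

/-- the chain as a list, last transposition first -/
def Tl (n : ℕ) (a b : ℕ → ℕ) : ℕ → List (Fin (n + 1) × Fin (n + 1))
  | 0 => []
  | i + 1 => (pos (n + 1) (a i), pos (n + 1) (b i)) :: Tl n a b i

theorem Tl_length (a b : ℕ → ℕ) (i : ℕ) : (Tl n a b i).length = i := by
  induction i with
  | zero => rfl
  | succ i ih => rw [Tl, List.length_cons, ih]

theorem tProd_succ (a b : ℕ → ℕ) (i : ℕ) :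
    tProd (n + 1) a b (i + 1) = tProd (n + 1) a b i * t (n + 1) (a i) (b i) := by
  unfold tProd
  rw [List.range_succ, List.map_append, List.prod_append]
  simp

theorem PT_Tl (a b : ℕ → ℕ) (i : ℕ) : PT (Tl n a b i) = tProd (n + 1) a b i := by
  induction i with
  | zero => simp [Tl, PT, tProd]
  | succ i ih =>
    rw [tProd_succ, ← ih, t, Equiv.swap_comm]; rfl

theorem mem_Tl (a b : ℕ → ℕ) (i : ℕ) (x) (hx : x ∈ Tl n a b i) :
    ∃ j, j < i ∧ x = (pos (n + 1) (a j), pos (n + 1) (b j)) := by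
  induction i with
  | zero => simp [Tl] at hx
  | succ i ih =>
    rw [Tl, List.mem_cons] at hx
    rcases hx with h | h
    · exact ⟨i, by omega, h⟩
    · obtain ⟨j, h1, h2⟩ := ih h
      exact ⟨j, by omega, h2⟩

theorem pos_val' {j : ℕ} (h1 : 1 ≤ j) (h2 : j ≤ n + 1) : ((pos (n + 1) j : Fin (n + 1)) : ℕ) = j - 1 :=
  Nat.mod_eq_of_lt (by omega)

theorem Adm_Tl {k m : ℕ} (a b : ℕ → ℕ) 
    (h : ∀ i, i < m → 1 ≤ a i ∧ a i ≤ k ∧ k < b i ∧ b i ≤ n + 1)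
    (ha : ∀ i j, i < m → j < m → i ≠ j → a i ≠ a j) (i : ℕ) (hi : i ≤ m) :
    Adm k (Tl n a b i) := by
  constructor
  · induction i with
    | zero => simp [Tl]
    | succ i ih =>
      rw [Tl, List.map_cons, List.nodup_cons]
      refine ⟨?_, ih (by omega)⟩
      intro hm
      rw [List.mem_map] at hm
      obtain ⟨x, hx, e⟩ := hm
      obtain ⟨j, hj, rfl⟩ := mem_Tl a b i x hx
      have e := congrArg Fin.val e
      have h1 := h i (by omega)
      have h2 := h j (by omega)
      simp only at e
      rw [pos_val' (by omega) (by omega), pos_val' (by omega) (by omega)] at e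
      exact ha i j (by omega) (by omega) (by omega) (by omega)
  · intro x hx
    obtain ⟨j, hj, rfl⟩ := mem_Tl a b i x hx
    have h2 := h j (by omega)
    simp only
    rw [pos_val' (by omega) (by omega), pos_val' (by omega) (by omega)]
    omega

theorem OkC_Tl {k m : ℕ} (w : Equiv.Perm (Fin (n + 1))) (a b : ℕ → ℕ) 
    (h : StepOK (n + 1) k m w a b) (i : ℕ) (hi : i ≤ m) :
    OkC w (Tl n a b i) := by
  induction i with
  | zero => trivial
  | succ i ih =>
    refine ⟨?_, ?_, ih (by omega)⟩
    · have h2 := h.1 i (by omega)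
      rw [Fin.lt_def]
      simp only
      rw [pos_val' (by omega) (by omega), pos_val' (by omega) (by omega)]
      omega
    · change len (w * PT (Tl n a b (i + 1))) = _
      rw [PT_Tl, PT_Tl, h.2 _ hi, h.2 i (by omega)]; omega

theorem count_Tl {k m : ℕ} (a b : ℕ → ℕ) 
    (h : ∀ i, i < m → 1 ≤ a i ∧ a i ≤ k ∧ k < b i ∧ b i ≤ n + 1) (p : Fin (n + 1))
    (i : ℕ) (hi : i ≤ m) :
    ((Tl n a b i).map Prod.snd).count p.rev = dJ b i (n + 1) (p + 1) := by
  induction i with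
  | zero => simp [Tl, dJ]
  | succ i ih =>
    rw [Tl, List.map_cons, List.count_cons, ih (by omega)]
    unfold dJ
    rw [Finset.range_add_one, Finset.filter_insert]
    have h2 := h i (by omega)
    have hiff : (pos (n + 1) (b i) == p.rev) = true ↔ b i = n + 1 + 1 - ((p : ℕ) + 1) := by
      rw [beq_iff_eq, Fin.ext_iff, pos_val' (by omega) (by omega), Fin.val_rev]
      have := p.2
      omega
    by_cases hb : b i = n + 1 + 1 - ((p : ℕ) + 1)
    · rw [if_pos (hiff.mpr hb), if_pos hb, Finset.card_insert_of_notMem]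
      simp
    · rw [if_neg (fun h => hb (hiff.mp h)), if_neg hb, add_zero]

theorem phi_monomial (s : Fin (n + 1) →₀ ℕ) : ∃ L : List (Fin (n + 1)),
    phi (monomial s 1) = nprod L ∧ ∀ p : Fin (n + 1), L.count p.rev = s p := by
  obtain ⟨L, h1, h2⟩ := exists_list_prod (n := n) (fun p => s p)
  refine ⟨L.map Fin.rev, ?_, ?_⟩
  · have e : (monomial s (1 : ℤ)) = (L.map X).prod := by
      rw [← h1, monomial_eq, C_1, one_mul, Finsupp.prod_fintype _ _ (fun _ => pow_zero _)]
    rw [e, map_list_prod, List.map_map]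
    unfold nprod
    rw [List.map_map]
    congr 1
    apply List.map_congr_left
    intro x _
    exact phi_X x
  · intro p
    rw [List.count_map_of_injective _ _ Fin.rev_injective, h2]

theorem cf_schur {k m : ℕ} (w : Equiv.Perm (Fin (n + 1))) (a b : ℕ → ℕ)
    (h : StepOK (n + 1) k m w a b)
    (ha : ∀ i j, i < m → j < m → i ≠ j → a i ≠ a j) (kap : ℕ → ℕ) (d : Fin (n + 1) →₀ ℕ)
    (hd : ∀ p : Fin (n + 1), d p = dJ b m (n + 1) (p + 1)) :
    cf (w * tProd (n + 1) a b m) (Sch w * phi (schurPoly (n + 1) (n + 1 - k) kap)) =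
      coeff d (schurPoly (n + 1) (n + 1 - k) kap) := by
  set f := schurPoly (n + 1) (n + 1 - k) kap with hf
  have key : ∀ s ∈ f.support, cf (w * tProd (n + 1) a b m) (Sch w * phi (monomial s 1)) =
      if s = d then 1 else 0 := by
    intro s hs
    obtain ⟨L, h1, h2⟩ := phi_monomial s
    rw [h1, mul_comm, ← PT_Tl, cf_list w _ (Adm_Tl a b h.1 ha m le_rfl) (OkC_Tl w a b h m le_rfl)
      (by rw [PT_Tl, h.2 m le_rfl, Tl_length])]
    · congr 1
      rw [List.perm_iff_count, eq_iff_iff]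
      constructor
      · intro hp
        ext p
        rw [← h2, hp, count_Tl a b h.1 p m le_rfl, hd]
      · rintro rfl q
        obtain ⟨p, rfl⟩ := Fin.rev_surjective q
        rw [h2, count_Tl a b h.1 p m le_rfl, hd]
    · intro q hq
      by_contra hc
      have h3 := h2 q.rev
      rw [Fin.rev_rev, schurPoly_support _ _ s hs q.rev (by rw [Fin.val_rev]; omega)] at h3
      exact List.count_eq_zero.mp h3 hq
  have e : Sch w * phi f = ∑ s ∈ f.support, coeff s f • (Sch w * phi (monomial s 1)) := by
    conv_lhs => rw [f.as_sum, map_sum, Finset.mul_sum]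
    refine Finset.sum_congr rfl fun s _ => ?_
    rw [← mul_smul_comm, ← map_zsmul, smul_monomial, smul_eq_mul, mul_one]
  rw [e, cf_sum]
  rw [Finset.sum_congr rfl (g := fun s => if s = d then coeff d f else 0)]
  · rw [Finset.sum_ite_eq']
    split_ifs with h
    · rfl
    · rw [notMem_support_iff] at h; exact h.symm
  · intro s hs
    rw [cf_smul, key s hs]
    split_ifs with h
    · subst h; simp
    · simp

theorem main_aux (n k m : ℕ) (hkn : k ≤ n + 1)
    (w w' : Equiv.Perm (Fin (n + 1))) (a b : ℕ → ℕ)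
    (hstep : StepOK (n + 1) k m w a b) (hw' : w' = w * tProd (n + 1) a b m)
    (ha : ∀ i j, i < m → j < m → i ≠ j → a i ≠ a j)
    (nu : ℕ → ℕ) (hnu : IsPartFun k nu) 
    (wnu : Equiv.Perm (Fin (n + 1))) (hwnu : IsGrassOf (n + 1) k nu wnu)
    (c : Equiv.Perm (Fin (n + 1)) → ℤ)
    (hc : SS (n + 1) w * SS (n + 1) wnu = ∑ u, c u • SS (n + 1) u)
    (cLR : (ℕ → ℕ) → ℤ) (hfin : (Function.support cLR).Finite)
    (hsupp : ∀ lam, cLR lam ≠ 0 → IsPartFun (n + 1 - k) lam)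
    (hLR : schurPoly (n + 1) (n + 1 - k) (muJ' b m (n + 1) k) *
        schurPoly (n + 1) (n + 1 - k) (conjPart k nu) =
      ∑ᶠ lam, cLR lam • schurPoly (n + 1) (n + 1 - k) lam) :
    c w' = cLR (lamJ' b m (n + 1) k) := by
  have hd0 : ∀ j, n + 1 - k < j → dJ b m (n + 1) j = 0 := by
    intro j hj
    unfold dJ
    rw [Finset.card_eq_zero, Finset.filter_eq_empty_iff]
    intro i hi
    have := hstep.1 i (Finset.mem_range.mp hi)
    omega
  have hlm : ∀ j, 1 ≤ j → lamJ' b m (n + 1) k (j + 1) = muJ' b m (n + 1) k j := by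
    intro j hj
    unfold lamJ' muJ'
    rw [if_neg (by omega), if_neg (by omega), if_neg (by omega)]
    by_cases hjK : j + 1 ≤ n + 1 - k
    · rw [← Finset.add_sum_Ioc_eq_sum_Icc hjK, add_comm]
      congr 1
      refine Finset.sum_congr ?_ fun _ _ => rfl
      ext x
      rw [Finset.mem_Icc, Finset.mem_Ioc]
      omega
    · rw [Finset.Icc_eq_empty (by omega), Finset.Icc_eq_empty (by omega), hd0 _ (by omega)]
      rfl
  have hlam : ∀ j, 1 ≤ j → lamJ' b m (n + 1) k j = muJ' b m (n + 1) k j + dJ b m (n + 1) j := by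
    intro j hj
    rw [lamJ', if_neg (by omega)]
  have hm : IsPartFun (n + 1 - k) (muJ' b m (n + 1) k) := by
    refine ⟨rfl, ?_, ?_⟩
    · intro j hj
      rw [← hlm j hj, hlam _ (by omega)]; omega
    · intro j hj
      rw [muJ', if_neg (by omega), Finset.Icc_eq_empty (by omega)]; rfl
  have hl : IsPartFun (n + 1 - k) (lamJ' b m (n + 1) k) := by
    refine ⟨rfl, ?_, ?_⟩
    · intro j hj
      rw [hlm j hj, hlam j hj]; omega
    · intro j hj
      rw [hlam _ (by omega), hm.2.2 j hj, hd0 j hj]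
  have hK : n + 1 - k ≤ n + 1 := by omega
  rw [LR_extract hK (lamJ' b m (n + 1) k) (muJ' b m (n + 1) k) (conjPart k nu) hl hm hlm
    (Finsupp.equivFunOnFinite.symm fun p : Fin (n + 1) => dJ b m (n + 1) (p + 1))
    (fun i => hlam _ (by omega)) (fun p hp => hd0 _ (by omega)) cLR hfin hsupp hLR,
    c_eq_cf w wnu c hc, cf_mul_phi, Sch_conj_grass k hkn nu hnu wnu hwnu, hw']
  exact cf_schur w a b hstep ha _ _ (fun p => rfl)

end final


/-- If `w →_{c[k,m]} w'`, witnessed by `a`, `b`, then the structure constant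
`c^{w'}_{w, w(ν)}` equals the Littlewood–Richardson coefficient `c^{λ'}_{μ',νᵗ}`,
where `d_j = #{i : bᵢ = n+1-j}`, `μ'_j = d_{j+1}+⋯+d_{n-k}` and `λ'_j = μ'_j + d_j`.
The structure constants and Littlewood–Richardson coefficients are encoded by
their defining properties, the latter via the expansion of `s_{μ'} · s_{νᵗ}` in
Schur polynomials in `x₁,…,x_{n-k}` (here the paper's `n` is `n+1`). -/
theorem structure_constant_eq_LR_column (n k m : ℕ) (hk : 1 ≤ k) (hkn : k ≤ n + 1)
    (hm : 1 ≤ m) (w w' : Equiv.Perm (Fin (n + 1))) (a b : ℕ → ℕ)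
    (hstep : StepOK (n + 1) k m w a b) (hw' : w' = w * tProd (n + 1) a b m)
    (ha : ∀ i j, i < m → j < m → i ≠ j → a i ≠ a j)
    (nu : ℕ → ℕ) (hnu : IsPartFun k nu) (hnu1 : nu 1 ≤ n + 1 - k)
    (wnu : Equiv.Perm (Fin (n + 1))) (hwnu : IsGrassOf (n + 1) k nu wnu)
    (c : Equiv.Perm (Fin (n + 1)) → ℤ)
    (hc : SS (n + 1) w * SS (n + 1) wnu = ∑ u, c u • SS (n + 1) u)
    (cLR : (ℕ → ℕ) → ℤ) (hfin : (Function.support cLR).Finite)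
    (hsupp : ∀ lam, cLR lam ≠ 0 → IsPartFun (n + 1 - k) lam)
    (hLR : schurPoly (n + 1) (n + 1 - k) (muJ' b m (n + 1) k) *
        schurPoly (n + 1) (n + 1 - k) (conjPart k nu) =
      ∑ᶠ lam, cLR lam • schurPoly (n + 1) (n + 1 - k) lam) :
    c w' = cLR (lamJ' b m (n + 1) k) := by
  exact main_aux n k m hkn w w' a b hstep hw' ha nu hnu wnu hwnu c hc cLR hfin hsupp hLR

end SchubertPieri
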